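/- Let k be an algebraically closed field, S a polynomial ring over k, and I ⊆ S a homogeneous ideal generated by n quadrics. If I has an associated prime p with height(p) = 3 and Hilbert–Samuel multiplicity e(S/p) = 1, then pd_S(S/I) ≤ 3n+1. -/

import Mathlib

open CategoryTheory Opposite

universe u

/-- The height of an ideal: the infimum of the heights (in the prime spectrum,
ordered by inclusion) of the primes containing it. -/
noncomputable def Ideal.heightENat {R : Type u} [CommRing R] (I : Ideal R) : ℕ∞ :=
  ⨅ (p : PrimeSpectrum R) (_ : I ≤ p.asIdeal), Order.height p

/-- The projective dimension of an `R`-module `M`: the least `n` such that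
`Ext^i(M, N) = 0` for all `i > n` and all modules `N` (and `⊤` if no such `n` exists). -/
noncomputable def projDim (R : Type u) [CommRing R] (M : Type u) [AddCommGroup M]
    [Module R M] : ℕ∞ :=
  sInf ((↑) '' {n : ℕ | ∀ i : ℕ, n < i → ∀ N : ModuleCat.{u} R,
    Subsingleton (((Ext R (ModuleCat.{u} R) i).obj (op (ModuleCat.of R M))).obj N)})

/-- The Hilbert function of the standard graded ring `S/J`, where
`S = k[x_1, ..., x_N]`: the `k`-dimension of the degree-`d` graded piece of `S/J`. -/
noncomputable def hilbertFunction (k : Type u) [Field k] {N : ℕ}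
    (J : Ideal (MvPolynomial (Fin N) k)) (d : ℕ) : ℕ :=
  Module.finrank k (Submodule.map (Ideal.Quotient.mkₐ k J).toLinearMap
    (MvPolynomial.homogeneousSubmodule (Fin N) k d))

open scoped Classical in
/-- The Hilbert–Samuel multiplicity `e(S/J)` of the graded ring `S/J`:
`(deg P)!` times the leading coefficient of the Hilbert polynomial `P` of `S/J`,
i.e. of the polynomial agreeing with the Hilbert function in all large degrees
(the degree of the Hilbert polynomial being `dim(S/J) - 1`). -/
noncomputable def hilbertSamuelMultiplicity (k : Type u) [Field k] {N : ℕ}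
    (J : Ideal (MvPolynomial (Fin N) k)) : ℚ :=
  if h : ∃ P : Polynomial ℚ, ∀ᶠ d : ℕ in Filter.atTop,
      (hilbertFunction k J d : ℚ) = P.eval (d : ℚ)
  then (h.choose.natDegree).factorial * h.choose.leadingCoeff
  else 0


section PartH0

open CategoryTheory Opposite


lemma subsingleton_oldExt {R : Type u} [CommRing R] (X N : ModuleCat.{u} R) (n : ℕ)
    [HasProjectiveDimensionLT X (n + 1)] :
    Subsingleton (((Ext R (ModuleCat.{u} R) (n + 1)).obj (op X)).obj N) := by
  apply ModuleCat.subsingleton_of_isZero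
  let P := projectiveResolution X
  refine Limits.IsZero.of_iso ?_ (P.isoExt (n + 1) N)
  rw [← HomologicalComplex.exactAt_iff_isZero_homology,
    HomologicalComplex.exactAt_iff' _ n (n + 1) (n + 2) (by simp) (by simp)]
  rw [ShortComplex.moduleCat_exact_iff]
  intro x hx
  change P.complex.X (n + 1) ⟶ N at x
  have hx' : P.complex.d (n + 2) (n + 1) ≫ x = 0 := hx
  have h0 : P.extMk x (n + 2) rfl hx' = 0 := Abelian.Ext.eq_zero_of_hasProjectiveDimensionLT _ (n + 1) le_rfl
  obtain ⟨g, hg⟩ := (P.extMk_eq_zero_iff x (n + 2) rfl hx' n rfl).1 h0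
  exact ⟨g, hg⟩

lemma projDim_le_of_hasProjectiveDimensionLE {R : Type u} [CommRing R] (M : Type u)
    [AddCommGroup M] [Module R M] (n : ℕ) (h : HasProjectiveDimensionLE (ModuleCat.of R M) n) :
    projDim R M ≤ (n : ℕ∞) := by
  apply sInf_le
  refine ⟨n, ?_, rfl⟩
  intro i hi N
  obtain ⟨j, rfl⟩ : ∃ j, i = j + 1 := ⟨i - 1, by omega⟩
  have : HasProjectiveDimensionLT (ModuleCat.of R M) (j + 1) :=
    hasProjectiveDimensionLT_of_ge _ (n + 1) _ (by omega)
  exact subsingleton_oldExt _ _ _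

end PartH0

section PartH1

open CategoryTheory Opposite
open scoped TensorProduct


lemma pdLE_zero_iff {R : Type u} [CommRing R] (M : Type u) [AddCommGroup M] [Module R M] :
    HasProjectiveDimensionLE (ModuleCat.of R M) 0 ↔ Module.Projective R M := by
  rw [IsProjective.iff_projective, projective_iff_hasProjectiveDimensionLT_one]

lemma pdLE_mono {R : Type u} [CommRing R] (M : Type u) [AddCommGroup M] [Module R M] {m n : ℕ}
    (h : m ≤ n) (hM : HasProjectiveDimensionLE (ModuleCat.of R M) m) :
    HasProjectiveDimensionLE (ModuleCat.of R M) n :=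
  hasProjectiveDimensionLT_of_ge _ (m + 1) _ (by omega)

/-- third term of short exact sequence -/
lemma pdLE_of_exact {R : Type u} [CommRing R] {A B M : Type u} [AddCommGroup A] [Module R A]
    [AddCommGroup B] [Module R B] [AddCommGroup M] [Module R M] (f : A →ₗ[R] B) (g : B →ₗ[R] M)
    (hf : Function.Injective f) (hg : Function.Surjective g) (hfg : Function.Exact f g) (n : ℕ)
    (hA : HasProjectiveDimensionLE (ModuleCat.of R A) n)
    (hB : HasProjectiveDimensionLE (ModuleCat.of R B) (n + 1)) :
    HasProjectiveDimensionLE (ModuleCat.of R M) (n + 1) := by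
  have w : (ModuleCat.ofHom f) ≫ (ModuleCat.ofHom g) = 0 := by
    ext x; exact hfg.apply_apply_eq_zero x
  let S : ShortComplex (ModuleCat.{u} R) := ShortComplex.mk _ _ w
  have hS : S.ShortExact := by
    have : Mono S.f := (ModuleCat.mono_iff_injective _).2 hf
    have : Epi S.g := (ModuleCat.epi_iff_surjective _).2 hg
    exact ⟨(ShortComplex.ShortExact.moduleCat_exact_iff_function_exact S).2 hfg⟩
  exact hS.hasProjectiveDimensionLT_X₃ (n + 1) hA hB

lemma pdLE_ker {R : Type u} [CommRing R] {F M : Type u} 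
    [AddCommGroup F] [Module R F] [AddCommGroup M] [Module R M] [Module.Projective R F]
    (g : F →ₗ[R] M)
    (hg : Function.Surjective g) (n : ℕ)
    (hM : HasProjectiveDimensionLE (ModuleCat.of R M) (n + 1)) :
    HasProjectiveDimensionLE (ModuleCat.of R (LinearMap.ker g)) n := by
  have w : (ModuleCat.ofHom (LinearMap.ker g).subtype) ≫ (ModuleCat.ofHom g) = 0 := by
    ext x; exact x.2
  let S : ShortComplex (ModuleCat.{u} R) := ShortComplex.mk _ _ w
  have hS : S.ShortExact := by
    have : Mono S.f := (ModuleCat.mono_iff_injective _).2 (Subtype.val_injective)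
    have : Epi S.g := (ModuleCat.epi_iff_surjective _).2 hg
    exact ⟨(ShortComplex.ShortExact.moduleCat_exact_iff_function_exact S).2 (LinearMap.exact_subtype_ker_map g)⟩
  have h2 : Projective S.X₂ := (IsProjective.iff_projective F).1 inferInstance
  exact (hS.hasProjectiveDimensionLT_X₃_iff n h2).1 hM

lemma baseChange_exact_ker {R R' : Type u} [CommRing R] [CommRing R'] [Algebra R R'] {F M : Type u}
    [AddCommGroup F] [Module R F] [AddCommGroup M] [Module R M]
    (g : F →ₗ[R] M) (hg : Function.Surjective g) :
    Function.Exact ((LinearMap.ker g).subtype.baseChange R') (g.baseChange R') := by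
  have h : Function.Exact (LinearMap.ker g).subtype g := LinearMap.exact_subtype_ker_map g
  have h2 := lTensor_exact R' h hg
  exact h2

/-- base change lemma -/
lemma pdLE_baseChange {R R' : Type u} [CommRing R] [CommRing R'] [Algebra R R'] (l : R)
    (hl : IsSMulRegular R l)
    (hinj : ∀ (F : Type u) [AddCommGroup F] [Module R F] (K : Submodule R F),
      IsSMulRegular (F ⧸ K) l → Function.Injective (K.subtype.baseChange R'))
    (n : ℕ) (M : Type u) [AddCommGroup M] [Module R M] (hM : IsSMulRegular M l)
    (h : HasProjectiveDimensionLE (ModuleCat.of R M) n) :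
    HasProjectiveDimensionLE (ModuleCat.of R' (R' ⊗[R] M)) n := by
  induction n generalizing M with
  | zero =>
    rw [pdLE_zero_iff] at h ⊢
    infer_instance
  | succ n ih =>
    let F := M →₀ R
    let g : F →ₗ[R] M := Finsupp.linearCombination R id
    have hg : Function.Surjective g := fun m => ⟨Finsupp.single m 1, by rw [Finsupp.linearCombination_single]; simp⟩
    have hF : IsSMulRegular F l := by
      intro a b hab
      ext m
      exact hl (DFunLike.congr_fun hab m)
    have hK : IsSMulRegular (LinearMap.ker g) l := by
      intro a b hab
      exact Subtype.ext (hF (congrArg Subtype.val hab))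
    have h1 := ih (LinearMap.ker g) hK (pdLE_ker g hg n h)
    have hq : IsSMulRegular (F ⧸ LinearMap.ker g) l := by
      intro a b hab
      let e := g.quotKerEquivOfSurjective hg
      apply e.injective
      apply hM
      simpa using congrArg e hab
    refine pdLE_of_exact ((LinearMap.ker g).subtype.baseChange R') (g.baseChange R') (hinj _ _ hq)
      (LinearMap.lTensor_surjective R' hg)
      ?_ n h1 ?_
    · exact baseChange_exact_ker g hg
    exact pdLE_mono _ (Nat.zero_le _) ((pdLE_zero_iff _).2 inferInstance)

lemma pdLE_baseChange_flat {R R' : Type u} [CommRing R] [CommRing R'] [Algebra R R']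
    [Module.Flat R R']
    (n : ℕ) (M : Type u) [AddCommGroup M] [Module R M] 
    (h : HasProjectiveDimensionLE (ModuleCat.of R M) n) :
    HasProjectiveDimensionLE (ModuleCat.of R' (R' ⊗[R] M)) n :=
  pdLE_baseChange (R' := R') 1 (IsSMulRegular.one R)
    (fun F _ _ K _ => Module.Flat.lTensor_preserves_injective_linearMap (M := R') _
      K.subtype_injective)
    n M (IsSMulRegular.one M) h

lemma pdLE_baseChange_quot {R R' : Type u} [CommRing R] [CommRing R'] [Algebra R R'] (l : R)
    (hl : IsSMulRegular R l) (hs : Function.Surjective (algebraMap R R'))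
    (hk : RingHom.ker (algebraMap R R') = Ideal.span {l})
    (n : ℕ) (M : Type u) [AddCommGroup M] [Module R M] (hM : IsSMulRegular M l)
    (h : HasProjectiveDimensionLE (ModuleCat.of R M) n) :
    HasProjectiveDimensionLE (ModuleCat.of R' (R' ⊗[R] M)) n := by
  refine pdLE_baseChange l hl ?_ n M hM h
  intro F _ _ K hK
  rw [injective_iff_map_eq_zero]
  intro x hx
  obtain ⟨y, rfl⟩ : ∃ y : K, (1 : R') ⊗ₜ[R] y = x := by
    induction x using TensorProduct.induction_on with
    | zero => exact ⟨0, by simp⟩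
    | tmul a b =>
      obtain ⟨r, rfl⟩ := hs a
      exact ⟨r • b, by rw [TensorProduct.tmul_smul, TensorProduct.smul_tmul', Algebra.smul_def, mul_one]⟩
    | add a b ha hb =>
      rw [map_add] at hx
      have key : ∀ a : R' ⊗[R] K, ∃ y : K, (1 : R') ⊗ₜ[R] y = a := by
        intro a
        induction a using TensorProduct.induction_on with
        | zero => exact ⟨0, by simp⟩
        | tmul a b =>
          obtain ⟨r, rfl⟩ := hs a
          exact ⟨r • b, by rw [TensorProduct.tmul_smul, TensorProduct.smul_tmul', Algebra.smul_def, mul_one]⟩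
        | add a b ha hb =>
          obtain ⟨c, rfl⟩ := ha
          obtain ⟨d, rfl⟩ := hb
          exact ⟨c + d, by rw [TensorProduct.tmul_add]⟩
      exact key _
  have hx' : (1 : R') ⊗ₜ[R] (y : F) = 0 := by simpa using hx
  -- y ∈ l F
  have hlz : algebraMap R R' l = 0 := by
    have : l ∈ RingHom.ker (algebraMap R R') := hk ▸ Ideal.mem_span_singleton_self l
    exact this
  let LF : Submodule R F := LinearMap.range (LinearMap.lsmul R F l)
  have hy : (y : F) ∈ LF := by
    have hex := rTensor_exact F (f := (LinearMap.ker (Algebra.linearMap R R')).subtype)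
      (g := Algebra.linearMap R R') (LinearMap.exact_subtype_ker_map _) hs
    obtain ⟨w, hw⟩ := (hex ((1 : R) ⊗ₜ[R] (y : F))).1 (by simpa using hx')
    have hw2 : (y : F) = TensorProduct.lid R F
        ((LinearMap.ker (Algebra.linearMap R R')).subtype.rTensor F w) := by rw [hw]; simp
    rw [hw2]
    clear hw hw2
    induction w using TensorProduct.induction_on with
    | zero => simp
    | tmul a b =>
      have hr' : (a : R) ∈ Ideal.span {l} := hk ▸ a.2
      obtain ⟨c, hc⟩ := Ideal.mem_span_singleton'.1 hr'
      refine ⟨c • b, ?_⟩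
      simp [← hc, mul_smul, smul_comm c l]
    | add a b ha hb => rw [map_add, map_add]; exact add_mem ha hb
  obtain ⟨z, hz⟩ := hy
  have hz : l • z = y := hz
  have hzK : z ∈ K := by
    rw [← Submodule.Quotient.mk_eq_zero]
    apply hK
    change l • Submodule.Quotient.mk z = l • (0 : F ⧸ K)
    rw [← Submodule.Quotient.mk_smul, hz]
    simp
  have : y = l • (⟨z, hzK⟩ : K) := Subtype.ext hz.symm
  rw [this, TensorProduct.tmul_smul, TensorProduct.smul_tmul', Algebra.smul_def, hlz]
  simp

end PartH1

section PartH2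

open CategoryTheory Opposite
open scoped TensorProduct Polynomial


section
variable {R : Type u} [CommRing R] {M : Type u} [AddCommGroup M] [Module R M] [Module R[X] M]
  [IsScalarTower R R[X] M]

/-- the augmentation -/
noncomputable def polyAug : R[X] ⊗[R] M →ₗ[R[X]] M :=
  TensorProduct.AlgebraTensorModule.lift
    { toFun := fun p =>
        { toFun := fun m => p • m
          map_add' := smul_add p
          map_smul' := fun r m => by rw [RingHom.id_apply, smul_comm] }
      map_add' := fun a b => by ext m; simp [add_smul]
      map_smul' := fun a b => by ext m; simp [mul_smul] }

noncomputable def mulXM : M →ₗ[R] M := 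
  { toFun := fun m => (Polynomial.X : R[X]) • m
    map_add' := smul_add _
    map_smul' := fun r m => by simp only [RingHom.id_apply]; rw [smul_comm] }

@[simp] lemma mulXM_apply (m : M) : mulXM (R := R) m = (Polynomial.X : R[X]) • m := rfl

@[simp] lemma polyAug_tmul (p : R[X]) (m : M) : polyAug (p ⊗ₜ[R] m) = p • m := rfl

/-- the difference map -/
noncomputable def polyDiff : R[X] ⊗[R] M →ₗ[R[X]] R[X] ⊗[R] M :=
  (LinearMap.lsmul R[X] _ Polynomial.X) - (mulXM (R := R) (M := M)).baseChange R[X]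

lemma polyDiff_tmul (p : R[X]) (m : M) : polyDiff (p ⊗ₜ[R] m) =
   (Polynomial.X * p) ⊗ₜ[R] m - p ⊗ₜ[R] ((Polynomial.X : R[X]) • m) := by
  simp [polyDiff, TensorProduct.smul_tmul']

noncomputable def tcoeff (i : ℕ) : R[X] ⊗[R] M →ₗ[R] M :=
  (TensorProduct.lid R M).toLinearMap ∘ₗ (Polynomial.lcoeff R i).rTensor M

@[simp] lemma tcoeff_tmul (i : ℕ) (p : R[X]) (m : M) : tcoeff i (p ⊗ₜ[R] m) = p.coeff i • m := by
  simp [tcoeff]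

lemma tcoeff_eq_zero (f : R[X] ⊗[R] M) : ∃ d, (∀ i, d ≤ i → tcoeff i f = 0) ∧
    f = ∑ i ∈ Finset.range d, ((Polynomial.X : R[X]) ^ i) ⊗ₜ[R] tcoeff i f := by
  suffices H : ∃ d0, ∀ d, d0 ≤ d → tcoeff d f = 0 ∧
    f = ∑ i ∈ Finset.range d, ((Polynomial.X : R[X]) ^ i) ⊗ₜ[R] tcoeff i f by
    obtain ⟨d, hd⟩ := H
    exact ⟨d, fun i hi => (hd i hi).1, (hd d le_rfl).2⟩
  induction f using TensorProduct.induction_on with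
  | zero => exact ⟨0, by simp⟩
  | tmul p m =>
    refine ⟨p.natDegree + 1, fun d hd => ⟨?_, ?_⟩⟩
    · rw [tcoeff_tmul, Polynomial.coeff_eq_zero_of_natDegree_lt (by omega), zero_smul]
    · conv_lhs => rw [p.as_sum_range' d (by omega)]
      rw [TensorProduct.sum_tmul]
      refine Finset.sum_congr rfl fun i _ => ?_
      rw [tcoeff_tmul, TensorProduct.tmul_smul, TensorProduct.smul_tmul', ← Polynomial.C_mul_X_pow_eq_monomial, Polynomial.smul_eq_C_mul]
  | add a b ha hb =>
    obtain ⟨d, hd⟩ := ha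
    obtain ⟨e, he⟩ := hb
    refine ⟨max d e, fun i hi => ?_⟩
    have h1 := hd i (le_trans (le_max_left _ _) hi)
    have h2 := he i (le_trans (le_max_right _ _) hi)
    refine ⟨by rw [map_add, h1.1, h2.1, add_zero], ?_⟩
    simp only [map_add, TensorProduct.tmul_add, Finset.sum_add_distrib]
    rw [← h1.2, ← h2.2]

lemma tcoeff_diff (i : ℕ) (f : R[X] ⊗[R] M) :
    tcoeff (i + 1) (polyDiff f) = tcoeff i f - (Polynomial.X : R[X]) • tcoeff (i + 1) f := by
  induction f using TensorProduct.induction_on with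
  | zero => simp
  | tmul p m => rw [polyDiff_tmul]; simp [Polynomial.coeff_X_mul]; rw [smul_comm]
  | add a b ha hb => rw [map_add, map_add, map_add, ha, hb, map_add, smul_add]; abel

lemma polyDiff_injective : Function.Injective (polyDiff (R := R) (M := M)) := by
  rw [injective_iff_map_eq_zero]
  intro f hf
  have key : ∀ i, tcoeff i f = (Polynomial.X : R[X]) • tcoeff (i + 1) f := by
    intro i
    have := tcoeff_diff i f
    rw [hf, map_zero] at this
    exact (sub_eq_zero.1 this.symm)
  obtain ⟨d, hd, hsum⟩ := tcoeff_eq_zero f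
  have h0 : ∀ j i, d ≤ i + j → tcoeff i f = 0 := by
    intro j
    induction j with
    | zero => intro i hi; exact hd i (by omega)
    | succ j ih => intro i hi; rw [key, ih (i + 1) (by omega), smul_zero]
  rw [hsum]
  refine Finset.sum_eq_zero fun i _ => ?_
  rw [h0 d i (by omega), TensorProduct.tmul_zero]

lemma polyAug_surjective : Function.Surjective (polyAug (R := R) (M := M)) :=
  fun m => ⟨1 ⊗ₜ m, by simp⟩

lemma polyDiff_exact : Function.Exact (polyDiff (R := R) (M := M)) polyAug := by
  intro f
  constructor
  · intro hf
    have key : ∀ f : R[X] ⊗[R] M, f - 1 ⊗ₜ[R] polyAug f ∈ LinearMap.range (polyDiff (R := R) (M := M)) := by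
      intro f
      obtain ⟨d, -, hsum⟩ := tcoeff_eq_zero f
      rw [hsum, map_sum, TensorProduct.tmul_sum, ← Finset.sum_sub_distrib]
      refine Submodule.sum_mem _ fun i hi => ?_
      clear hi
      generalize tcoeff i f = m
      induction i generalizing m with
      | zero => simp
      | succ i ih =>
        have h1 := ih ((Polynomial.X : R[X]) • m)
        have h2 : polyDiff ((Polynomial.X ^ i : R[X]) ⊗ₜ[R] m) ∈ LinearMap.range (polyDiff (R := R) (M := M)) := ⟨_, rfl⟩
        have := add_mem h1 h2
        rw [polyDiff_tmul] at this
        convert this using 1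
        simp only [polyAug_tmul, pow_succ', mul_smul, smul_comm (Polynomial.X ^ i : R[X]) (Polynomial.X : R[X]) m]
        abel
    have := key f
    rw [hf, TensorProduct.tmul_zero, sub_zero] at this
    exact this
  · rintro ⟨g, rfl⟩
    induction g using TensorProduct.induction_on with
    | zero => simp
    | tmul p m => rw [polyDiff_tmul]; simp [mul_smul, smul_comm p (Polynomial.X : R[X]) m]
    | add a b ha hb => rw [map_add, map_add, ha, hb, add_zero]

lemma pdLE_polynomial (n : ℕ) (h : HasProjectiveDimensionLE (ModuleCat.of R M) n) :
    HasProjectiveDimensionLE (ModuleCat.of R[X] M) (n + 1) := by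
  have h1 := pdLE_baseChange_flat (R' := R[X]) n M h
  exact pdLE_of_exact polyDiff polyAug polyDiff_injective polyAug_surjective polyDiff_exact n h1
    (pdLE_mono _ (Nat.le_succ n) h1)
end

end PartH2

section PartH3

open CategoryTheory Opposite
open scoped TensorProduct Polynomial


attribute [local instance] RingHomInvPair.of_ringEquiv in
lemma pdLE_transport {R R' : Type u} [CommRing R] [CommRing R'] (e : R ≃+* R') {M M' : Type u}
    [AddCommGroup M] [Module R M] [AddCommGroup M'] [Module R' M'] (f : M ≃+ M')
    (hf : ∀ r m, f (r • m) = e r • f m) (n : ℕ)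
    (h : HasProjectiveDimensionLE (ModuleCat.of R M) n) :
    HasProjectiveDimensionLE (ModuleCat.of R' M') n := by
  let e' : M ≃ₛₗ[RingHomClass.toRingHom e] M' := { f with map_smul' := hf }
  exact ModuleCat.hasProjectiveDimensionLE_of_semiLinearEquiv (M := ModuleCat.of R M)
    (N := ModuleCat.of R' M') e e' n

lemma pdLE_mvPolynomial {B : Type u} [CommRing B] (m : ℕ) (R : Type u) [CommRing R] [Algebra B R]
    (e : MvPolynomial (Fin m) B ≃ₐ[B] R) (M : Type u) [AddCommGroup M] [Module B M] [Module R M]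
    [IsScalarTower B R M] [hM : Module.Projective B M] :
    HasProjectiveDimensionLE (ModuleCat.of R M) m := by
  induction m generalizing R with
  | zero =>
    refine pdLE_transport (((MvPolynomial.isEmptyAlgEquiv B (Fin 0)).symm.trans e).toRingEquiv)
      (AddEquiv.refl M) ?_ 0 ((pdLE_zero_iff M).2 hM)
    intro b x
    have : ((MvPolynomial.isEmptyAlgEquiv B (Fin 0)).symm.trans e).toRingEquiv b = algebraMap B R b :=
      ((MvPolynomial.isEmptyAlgEquiv B (Fin 0)).symm.trans e).commutes b
    rw [this]
    simp
  | succ m ih =>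
    let R0 := MvPolynomial (Fin m) B
    let e' : R0[X] ≃ₐ[B] R := (MvPolynomial.finSuccEquiv B m).symm.trans e
    let : Module R0[X] M := Module.compHom M (e'.toRingEquiv.toRingHom)
    let : Module R0 M := Module.compHom M (Polynomial.C : R0 →+* R0[X])
    have : IsScalarTower R0 R0[X] M := ⟨fun a b x => by
      rw [Polynomial.smul_eq_C_mul, mul_smul]; rfl⟩
    have : IsScalarTower B R0 M := IsScalarTower.of_algebraMap_smul fun b x => by
      change e' (Polynomial.C (algebraMap B R0 b)) • x = b • x
      have : Polynomial.C (algebraMap B R0 b) = algebraMap B R0[X] b := rfl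
      rw [this, e'.commutes, algebraMap_smul]
    have h1 := ih R0 AlgEquiv.refl
    have h2 := pdLE_polynomial m h1
    exact pdLE_transport e'.toRingEquiv (AddEquiv.refl M) (fun _ _ => rfl) _ h2

lemma pdLE_mvPolynomial' {B : Type u} {σ : Type*} [CommRing B] [Fintype σ] (R : Type u) [CommRing R]
    [Algebra B R]
    (e : MvPolynomial σ B ≃ₐ[B] R) (M : Type u) [AddCommGroup M] [Module B M] [Module R M]
    [IsScalarTower B R M] [hM : Module.Projective B M] (m : ℕ) (hm : Fintype.card σ ≤ m) :
    HasProjectiveDimensionLE (ModuleCat.of R M) m :=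
  pdLE_mono _ hm (pdLE_mvPolynomial (Fintype.card σ) R
    ((MvPolynomial.renameEquiv B (Fintype.equivFin σ).symm).trans e) M)

end PartH3

section PartG1

open scoped Polynomial


section TopCoeff
open MvPolynomial
variable {k : Type u} [Field k] {σ : Type} {T : Type u} [CommRing T] [Algebra k T]

/-- leading coefficients under polynomial substitution -/
lemma coeff_prod_top (φ : σ → T[X]) (d : σ → ℕ) (hd : ∀ v, (φ v).natDegree ≤ d v) (s : σ →₀ ℕ) :
    (s.prod fun v m => φ v ^ m).natDegree ≤ Finsupp.weight d s ∧
    (s.prod fun v m => φ v ^ m).coeff (Finsupp.weight d s) =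
      s.prod fun v m => ((φ v).coeff (d v)) ^ m := by
  induction s using Finsupp.induction_linear with
  | zero => simp
  | add f g hf hg =>
    rw [Finsupp.prod_add_index' (by simp) (by intros; rw [pow_add]),
      Finsupp.prod_add_index' (by simp) (by intros; rw [pow_add]), map_add]
    exact ⟨(Polynomial.natDegree_mul_le).trans (add_le_add hf.1 hg.1), by
      rw [Polynomial.coeff_mul_add_eq_of_natDegree_le hf.1 hg.1, hf.2, hg.2]⟩
  | single v m =>
    rw [Finsupp.prod_single_index (by simp), Finsupp.prod_single_index (by simp),
      Finsupp.weight_single, smul_eq_mul]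
    exact ⟨Polynomial.natDegree_pow_le_of_le m (hd v), Polynomial.coeff_pow_of_natDegree_le (hd v)⟩

lemma aeval_eq_sum_supp {T : Type u} [CommRing T] [Algebra k T] (φ : σ → T) (f : MvPolynomial σ k) :
    aeval φ f = ∑ s ∈ f.support, algebraMap k T (f.coeff s) * s.prod fun v m => φ v ^ m := by
  conv_lhs => rw [f.as_sum]
  rw [map_sum]
  exact Finset.sum_congr rfl fun s _ => aeval_monomial _ _ _

lemma coeff_aeval_top (φ : σ → T[X]) (d : σ → ℕ) (hd : ∀ v, (φ v).natDegree ≤ d v)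
    (f : MvPolynomial σ k) (M : ℕ) (hM : ∀ s ∈ f.support, Finsupp.weight d s ≤ M) :
    (aeval φ f).coeff M =
      ∑ s ∈ f.support with Finsupp.weight d s = M, algebraMap k T (f.coeff s) *
        s.prod fun v m => ((φ v).coeff (d v)) ^ m := by
  rw [aeval_eq_sum_supp, Polynomial.finsetSum_coeff, Finset.sum_filter]
  refine Finset.sum_congr rfl fun s hs => ?_
  have h := coeff_prod_top φ d hd s
  rw [IsScalarTower.algebraMap_apply k T T[X], Polynomial.algebraMap_apply, Algebra.algebraMap_self,
    RingHom.id_apply, Polynomial.coeff_C_mul]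
  split_ifs with h1
  · rw [← h1, h.2]
  · rw [Polynomial.coeff_eq_zero_of_natDegree_lt (lt_of_le_of_lt h.1 (lt_of_le_of_ne (hM s hs) h1)),
      mul_zero]

/-- for exact torus substitutions -/
lemma coeff_aeval_torus (c : σ → T) (d : σ → ℕ) (f : MvPolynomial σ k) (m : ℕ) :
    (aeval (fun v => Polynomial.C (c v) * Polynomial.X ^ d v : σ → T[X]) f).coeff m =
      aeval c (weightedHomogeneousComponent d m f) := by
  classical
  have hs : ∀ s : σ →₀ ℕ, (s.prod fun v j => (Polynomial.C (c v) * Polynomial.X ^ d v : T[X]) ^ j) =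
      Polynomial.C (s.prod fun v j => c v ^ j) * Polynomial.X ^ (Finsupp.weight d s) := by
    intro s
    induction s using Finsupp.induction_linear with
    | zero => simp
    | add f g hf hg =>
      rw [Finsupp.prod_add_index' (by simp) (by intros; rw [pow_add]),
        Finsupp.prod_add_index' (by simp) (by intros; rw [pow_add]), map_add, hf, hg]
      simp only [map_mul, pow_add]; ring
    | single v m =>
      rw [Finsupp.prod_single_index (by simp), Finsupp.prod_single_index (by simp),
        Finsupp.weight_single, smul_eq_mul, mul_pow, ← pow_mul, map_pow, mul_comm m]
  rw [aeval_eq_sum_supp, Polynomial.finsetSum_coeff, weightedHomogeneousComponent_apply, map_sum,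
    Finset.sum_filter]
  refine Finset.sum_congr rfl fun s _ => ?_
  rw [hs, IsScalarTower.algebraMap_apply k T T[X], Polynomial.algebraMap_apply,
    Algebra.algebraMap_self, RingHom.id_apply, Polynomial.coeff_C_mul, Polynomial.coeff_C_mul,
    Polynomial.coeff_X_pow]
  by_cases h : Finsupp.weight d s = m
  · simp [h, aeval_monomial]
  · simp [h, Ne.symm h]

end TopCoeff

section
open MvPolynomial
variable {k : Type u} [Field k] {σ : Type}

lemma prod_monomial_eq (c : σ → MvPolynomial σ k) (t : σ → σ →₀ ℕ) (ε : σ → k) (s : σ →₀ ℕ)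
    (v0 : σ) (ht : t v0 = 0) (hε : ε v0 = 1)
    (h : ∀ v, s v ≠ 0 → v ≠ v0 → c v = monomial (t v) (ε v)) :
    (s.prod fun v m => c v ^ m) =
      c v0 ^ (s v0) * monomial (s.sum fun v m => m • t v) (s.prod fun v m => ε v ^ m) := by
  classical
  have h2 : (s.prod fun v m => c v ^ m) = s.prod fun v m =>
      (if v = v0 then c v0 else 1) ^ m * (monomial (t v) (ε v)) ^ m := by
    refine Finset.prod_congr rfl fun v hv => ?_
    by_cases hv0 : v = v0
    · subst hv0
      simp [ht, hε]
    · simp [hv0, h v (by simpa using hv) hv0]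
  rw [h2, Finsupp.prod_mul]
  congr 1
  · rw [Finsupp.prod, Finset.prod_eq_single v0]
    · simp
    · intro b _ hb; simp [hb]
    · intro h; simp [Finsupp.notMem_support_iff.1 h]
  · rw [Finsupp.sum, Finsupp.prod, Finsupp.prod]
    induction s.support using Finset.induction_on with
    | empty => simp
    | insert v S hv ih =>
      rw [Finset.prod_insert hv, Finset.prod_insert hv, Finset.sum_insert hv, ih, monomial_pow,
        monomial_mul]

/-- the main tool for linear independence -/
lemma top_contra (f : MvPolynomial σ k) (hf0 : f ≠ 0) (φ : σ → (MvPolynomial σ k)[X])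
    (d : σ → ℕ) (hd : ∀ v, (φ v).natDegree ≤ d v) (hφ : aeval φ f = 0)
    (t : σ → σ →₀ ℕ) (ε : σ → k) (v0 : σ) (ht : t v0 = 0) (hε : ε v0 = 1)
    (hε0 : ∀ v, ε v ≠ 0)
    (hc0 : (φ v0).coeff (d v0) ≠ 0)
    (H : ∀ M, ∀ s ∈ f.support, Finsupp.weight d s = M →
      (∀ s' ∈ f.support, Finsupp.weight d s' ≤ M) →
      (∀ v, s v ≠ 0 → v ≠ v0 → (φ v).coeff (d v) = monomial (t v) (ε v)))
    (inj : ∀ M, (∀ s' ∈ f.support, Finsupp.weight d s' ≤ M) → ∀ s ∈ f.support, ∀ s' ∈ f.support,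
      Finsupp.weight d s = M → Finsupp.weight d s' = M →
      s v0 = s' v0 ∧ ((s.sum fun v m => m • t v) = (s'.sum fun v m => m • t v) → s = s')) :
    False := by
  classical
  have hne : f.support.Nonempty := by simpa [Finset.nonempty_iff_ne_empty] using hf0
  obtain ⟨s0, hs0, hmax⟩ := Finset.exists_max_image f.support (fun s => Finsupp.weight d s) hne
  set M := Finsupp.weight d s0 with hM
  have h1 := coeff_aeval_top φ d hd f M hmax
  rw [hφ, Polynomial.coeff_zero] at h1
  have h2 : ∀ s ∈ f.support.filter (fun s => Finsupp.weight d s = M),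
      algebraMap k (MvPolynomial σ k) (f.coeff s) * (s.prod fun v m => ((φ v).coeff (d v)) ^ m) =
      ((φ v0).coeff (d v0)) ^ (s0 v0) * monomial (s.sum fun v m => m • t v)
        (f.coeff s * s.prod fun v m => ε v ^ m) := by
    intro s hs
    rw [Finset.mem_filter] at hs
    rw [prod_monomial_eq _ t ε s v0 ht hε (H M s hs.1 hs.2 hmax),
      (inj M hmax s hs.1 s0 hs0 hs.2 rfl).1, MvPolynomial.algebraMap_eq, mul_left_comm, C_mul_monomial]
  rw [Finset.sum_congr rfl h2, ← Finset.mul_sum] at h1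
  have h3 := (mul_eq_zero.1 h1.symm).resolve_left (pow_ne_zero _ hc0)
  have h4 := congrArg (coeff (s0.sum fun v m => m • t v)) h3
  rw [coeff_sum, Finset.sum_eq_single s0] at h4
  · rw [coeff_monomial, if_pos rfl, coeff_zero] at h4
    rcases mul_eq_zero.1 h4 with h5 | h5
    · exact (mem_support_iff.1 hs0) h5
    · exact (Finset.prod_ne_zero_iff.2 fun v _ => pow_ne_zero _ (hε0 v)) h5
  · intro s hs hne
    rw [Finset.mem_filter] at hs
    rw [coeff_monomial, if_neg]
    intro he
    exact hne ((inj M hmax s hs.1 s0 hs0 hs.2 rfl).2 he)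
  · intro h
    exact absurd (Finset.mem_filter.2 ⟨hs0, hM.symm⟩) h
end

end PartG1

section PartG2

open scoped Polynomial


/-- variables of the generic situation -/
inductive GV (n : ℕ) : Type
  | x : GV n
  | y : GV n
  | z : GV n
  | a : Fin n → GV n
  | b : Fin n → GV n
  | c : Fin n → GV n
  deriving DecidableEq

namespace GV
variable {n : ℕ}

def equivSum (n : ℕ) : GV n ≃ Fin 3 ⊕ (Fin n ⊕ Fin n ⊕ Fin n) where
  toFun
    | x => .inl 0
    | y => .inl 1
    | z => .inl 2
    | a i => .inr (.inl i)
    | b i => .inr (.inr (.inl i))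
    | c i => .inr (.inr (.inr i))
  invFun
    | .inl 0 => x
    | .inl 1 => y
    | .inl 2 => z
    | .inr (.inl i) => a i
    | .inr (.inr (.inl i)) => b i
    | .inr (.inr (.inr i)) => c i
  left_inv v := by cases v <;> rfl
  right_inv v := by
    rcases v with v | v | v | v
    · fin_cases v <;> rfl
    all_goals rfl

instance : Fintype (GV n) := Fintype.ofEquiv _ (equivSum n).symm

lemma card_GV : Fintype.card (GV n) = 3 * n + 3 := by
  rw [Fintype.card_congr (equivSum n)]
  simp
  omega

lemma sum_GV {M : Type*} [AddCommMonoid M] (f : GV n → M) :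
    ∑ v, f v = f x + f y + f z + ∑ i, f (a i) + ∑ i, f (b i) + ∑ i, f (c i) := by
  rw [← (equivSum n).symm.sum_comp, Fintype.sum_sum_type, Fintype.sum_sum_type,
    Fintype.sum_sum_type, Fin.sum_univ_three]
  simp only [equivSum, Equiv.coe_fn_symm_mk]
  abel

lemma weight_GV (d : GV n → ℕ) (s : GV n →₀ ℕ) : Finsupp.weight d s =
    s x * d x + s y * d y + s z * d z + ∑ i, s (a i) * d (a i) + ∑ i, s (b i) * d (b i)
      + ∑ i, s (c i) * d (c i) := by
  rw [Finsupp.weight_apply, Finsupp.sum_fintype _ _ (by simp), sum_GV]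
  simp

lemma tsum_GV (t : GV n → GV n →₀ ℕ) (s : GV n →₀ ℕ) (w : GV n) :
   (s.sum fun v m => m • t v) w =
    s x * t x w + s y * t y w + s z * t z w + ∑ i, s (a i) * t (a i) w + ∑ i, s (b i) * t (b i) w
      + ∑ i, s (c i) * t (c i) w := by
  rw [Finsupp.sum_fintype _ _ (by simp), Finsupp.finsetSum_apply, sum_GV]
  simp

variable (k : Type u) [Field k]
open MvPolynomial

/-- generic quadrics evaluated at a point -/
def qAt {T : Type u} [CommRing T] (v : GV n → T) (i : Fin n) : T :=
  v x * v (a i) + v y * v (b i) + v z * v (c i)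

noncomputable def piV : GV n → MvPolynomial (GV n) k
  | x => X x
  | y => X x * X y
  | z => X x * X z
  | a i => - (X y * X (b i) + X z * X (c i))
  | b i => X (b i)
  | c i => X (c i)

noncomputable def pV : GV n → MvPolynomial (GV n) k
  | x => 0
  | y => 0
  | z => 0
  | a i => X (a i)
  | b i => X (b i)
  | c i => X (c i)

variable (n) in
noncomputable def goodIdeal : Ideal (MvPolynomial (GV n) k) :=
  RingHom.ker (aeval (piV k) : MvPolynomial (GV n) k →ₐ[k] _) ⊓
  RingHom.ker (aeval (pV k) : MvPolynomial (GV n) k →ₐ[k] _)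

variable {k}

lemma mem_goodIdeal {f : MvPolynomial (GV n) k} :
    f ∈ goodIdeal n k ↔ aeval (piV k) f = 0 ∧ aeval (pV k) f = 0 := Iff.rfl

lemma piV_x : piV k (x : GV n) ≠ 0 := X_ne_zero _

lemma qAt_piV (i : Fin n) : qAt (piV k) i = 0 := by simp only [qAt, piV]; ring

lemma field_aux {K : Type*} [Field K] (X A Y B Z C : K) (hX : X ≠ 0)
    (h : X * A + Y * B + Z * C = 0) : - (Y / X * B + Z / X * C) = A := by
  field_simp
  linear_combination (-1) * h

lemma eval_of_pi {T : Type u} [CommRing T] [IsDomain T] [Algebra k T] (v : GV n → T)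
    (hx : v x ≠ 0) (hq : ∀ i, qAt v i = 0) (f : MvPolynomial (GV n) k)
    (hf : aeval (piV k) f = 0) : aeval v f = 0 := by
  let K := FractionRing T
  let ι := IsScalarTower.toAlgHom k T K
  have hι : Function.Injective ι := IsFractionRing.injective T K
  have hx' : ι (v x) ≠ 0 := by rwa [Ne, map_eq_zero_iff _ hι]
  let w : GV n → K := fun g => match g with
    | x => ι (v x)
    | y => ι (v y) / ι (v x)
    | z => ι (v z) / ι (v x)
    | a i => 0
    | b i => ι (v (b i))
    | c i => ι (v (c i))
  have hw : (aeval w).comp (aeval (piV k)) = ι.comp (aeval v : MvPolynomial (GV n) k →ₐ[k] T) := by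
    ext g
    simp only [AlgHom.comp_apply, aeval_X]
    have hq' : ∀ i, ι (v x) * ι (v (a i)) + ι (v y) * ι (v (b i)) + ι (v z) * ι (v (c i)) = 0 := by
      intro i
      have := congrArg ι (hq i)
      simpa [qAt] using this
    cases g with
    | x => simp [piV, w]
    | y => simp only [piV, map_mul, aeval_X, w]; exact mul_div_cancel₀ _ hx'
    | z => simp only [piV, map_mul, aeval_X, w]; exact mul_div_cancel₀ _ hx'
    | a i =>
      simp only [piV, map_mul, aeval_X, w, map_neg, map_add]
      exact field_aux _ _ _ _ _ _ hx' (hq' i)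
    | b i => simp [piV, w]
    | c i => simp [piV, w]
  apply hι
  have := DFunLike.congr_fun hw f
  simp only [AlgHom.comp_apply, hf, map_zero] at this
  rw [← this, map_zero]

lemma eval_of_p {T : Type u} [CommRing T] [Algebra k T] (v : GV n → T)
    (hx : v x = 0) (hy : v y = 0) (hz : v z = 0) (f : MvPolynomial (GV n) k)
    (hf : aeval (pV k) f = 0) : aeval v f = 0 := by
  have hw : (aeval v).comp (aeval (pV k)) = (aeval v : MvPolynomial (GV n) k →ₐ[k] T) := by
    ext g
    simp only [AlgHom.comp_apply, aeval_X]
    cases g <;> simp [pV, hx, hy, hz]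
  have := DFunLike.congr_fun hw f
  simp only [AlgHom.comp_apply, hf, map_zero] at this
  exact this.symm

/-- torus weights -/
def Tor (d : GV n → ℕ) : Prop :=
  ∀ i, d x + d (a i) = d y + d (b i) ∧ d x + d (a i) = d z + d (c i)

lemma good_component (d : GV n → ℕ) (hd : Tor d) (f : MvPolynomial (GV n) k) (m : ℕ)
    (hf : f ∈ goodIdeal n k) : weightedHomogeneousComponent d m f ∈ goodIdeal n k := by
  rw [mem_goodIdeal] at hf ⊢
  constructor
  · rw [← coeff_aeval_torus, eval_of_pi _ _ _ f hf.1, Polynomial.coeff_zero]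
    · simp [piV_x]
    · intro i
      have h := qAt_piV (k := k) i
      have h1 := (hd i).1
      have h2 := (hd i).2
      simp only [qAt] at h ⊢
      have e1 : ∀ p q : MvPolynomial (GV n) k, ∀ i j : ℕ, (Polynomial.C p * Polynomial.X ^ i) * (Polynomial.C q * Polynomial.X ^ j)
         = Polynomial.C (p * q) * Polynomial.X ^ (i + j) := by
        intros; rw [map_mul, pow_add]; ring
      rw [e1, e1, e1, ← h1, ← h2, ← add_mul, ← add_mul, ← map_add, ← map_add, h]
      simp
  · rw [← coeff_aeval_torus, eval_of_p _ _ _ _ f hf.2, Polynomial.coeff_zero]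
    all_goals simp [pV]

lemma qAt_aeval {T : Type u} [CommRing T] [Algebra k T] (v : GV n → T) (i : Fin n) :
    aeval v (qAt (X : GV n → MvPolynomial (GV n) k) i) = qAt v i := by
  simp [qAt]

variable (n k) in
noncomputable def genIdeal : Ideal (MvPolynomial (GV n) k) :=
  Ideal.span (Set.range (qAt (X : GV n → MvPolynomial (GV n) k)))

lemma genIdeal_le_good : genIdeal n k ≤ goodIdeal n k := by
  rw [genIdeal, Ideal.span_le]
  rintro _ ⟨i, rfl⟩
  rw [SetLike.mem_coe, mem_goodIdeal, qAt_aeval, qAt_aeval]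
  exact ⟨qAt_piV i, by simp [qAt, pV]⟩

end GV

end PartG2

section PartG3

open scoped Polynomial


namespace GV
open MvPolynomial
variable {n : ℕ} {k : Type u} [Field k]

/-- standard monomials -/
def Std (s : GV n →₀ ℕ) : Prop :=
  (∀ i, s x = 0 ∨ s (a i) = 0) ∧
  (∀ i j, i < j → s y = 0 ∨ s (a i) = 0 ∨ s (b j) = 0) ∧
  (∀ i j l, i < j → j < l → s z = 0 ∨ s (a i) = 0 ∨ s (b j) = 0 ∨ s (c l) = 0)

def StdSupp (f : MvPolynomial (GV n) k) : Prop := ∀ s ∈ f.support, Std s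

variable (n k) in
def stdSub : Submodule k (MvPolynomial (GV n) k) where
  carrier := {f | StdSupp f}
  zero_mem' := by simp [StdSupp]
  add_mem' := by
    classical
    intro f g hf hg s hs
    rcases Finset.mem_union.1 (support_add hs) with h | h
    · exact hf s h
    · exact hg s h
  smul_mem' := by
    intro r f hf s hs
    exact hf s (support_smul hs)

/-- weights for the reduction -/
def redWt : GV n → ℕ
  | x => 4 * n
  | y => 2 * n
  | z => 0
  | a _ => 0
  | b i => i
  | c i => 2 * i

lemma span_aux (s : GV n →₀ ℕ) :
    monomial s (1 : k) ∈ (genIdeal n k).restrictScalars k ⊔ stdSub n k := by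
  classical
  induction hw : Finsupp.weight (redWt (n := n)) s using Nat.strong_induction_on generalizing s with
  | _ w ih =>
  by_cases hs : Std s
  · apply Submodule.mem_sup_right
    intro t ht
    rw [support_monomial, if_neg one_ne_zero, Finset.mem_singleton] at ht
    rwa [ht]
  have hI : ∀ p, p ∈ genIdeal n k → p ∈ (genIdeal n k).restrictScalars k ⊔ stdSub n k :=
    fun p hp => Submodule.mem_sup_left hp
  have hq : ∀ i, qAt (X : GV n → MvPolynomial (GV n) k) i ∈ genIdeal n k :=
    fun i => Ideal.subset_span ⟨i, rfl⟩
  have ih' : ∀ t, Finsupp.weight (redWt (n := n)) t < w →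
    monomial t (1 : k) ∈ (genIdeal n k).restrictScalars k ⊔ stdSub n k := fun t ht => ih _ ht t rfl
  have hXX : ∀ (m : GV n →₀ ℕ) (u v : GV n), monomial m (1 : k) * (X u * X v) =
      monomial (m + (Finsupp.single u 1 + Finsupp.single v 1)) 1 := by
    intro m u v; simp [X, monomial_mul]
  have hXXX : ∀ (m : GV n →₀ ℕ) (u v w : GV n), monomial m (1 : k) * (X u * X v * X w) =
      monomial (m + (Finsupp.single u 1 + Finsupp.single v 1 + Finsupp.single w 1)) 1 := by
    intro m u v w; simp [X, monomial_mul]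
  have hXXXX : ∀ (m : GV n →₀ ℕ) (u v w r : GV n), monomial m (1 : k) * (X u * X v * X w * X r) =
      monomial (m + (Finsupp.single u 1 + Finsupp.single v 1 + Finsupp.single w 1 +
        Finsupp.single r 1)) 1 := by
    intro m u v w r; simp [X, monomial_mul]
  have sub : ∀ e : GV n →₀ ℕ, (∀ v, e v ≤ s v) → ∃ m, s = m + e := fun e he =>
    ⟨s - e, (tsub_add_cancel_of_le (show e ≤ s from he)).symm⟩
  rw [Std, not_and_or, not_and_or] at hs
  rcases hs with hs | hs | hs
  · push Not at hs
    obtain ⟨i, h1, h2⟩ := hs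
    obtain ⟨m, hm⟩ := sub (Finsupp.single x 1 + Finsupp.single (a i) 1) (by
      intro v; cases v <;> simp [Finsupp.single_apply] <;> (try split_ifs) <;> (try subst_vars) <;> omega)
    have e : monomial s (1 : k) = monomial m 1 * qAt X i - monomial m 1 * (X y * X (b i)) -
        monomial m 1 * (X z * X (c i)) := by
      rw [hm, ← hXX]; simp only [qAt]; ring
    have hi := i.2
    rw [e, hXX, hXX]
    refine Submodule.sub_mem _ (Submodule.sub_mem _ (hI _ (Ideal.mul_mem_left _ _ (hq i)))
      (ih' _ ?_)) (ih' _ ?_)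
    all_goals
      rw [← hw, hm]
      simp only [map_add, Finsupp.weight_single, redWt, smul_eq_mul]
      omega
  · push Not at hs
    obtain ⟨i, j, hij, h1, h2, h3⟩ := hs
    obtain ⟨m, hm⟩ := sub (Finsupp.single y 1 + Finsupp.single (a i) 1 + Finsupp.single (b j) 1) (by
      intro v; cases v <;> simp [Finsupp.single_apply] <;> (try split_ifs) <;> (try subst_vars) <;> omega)
    have e : monomial s (1 : k) = monomial m 1 * (X (a i) * qAt X j - X (a j) * qAt X i)
        + monomial m 1 * (X y * X (a j) * X (b i)) + monomial m 1 * (X z * X (a j) * X (c i))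
        - monomial m 1 * (X z * X (a i) * X (c j)) := by
      rw [hm, ← hXXX]; simp only [qAt]; ring
    have hj := j.2
    have hij' : (i : ℕ) < j := hij
    rw [e, hXXX, hXXX, hXXX]
    refine Submodule.sub_mem _ (Submodule.add_mem _ (Submodule.add_mem _ (hI _ (Ideal.mul_mem_left _ _
      (Ideal.sub_mem _ (Ideal.mul_mem_left _ _ (hq _)) (Ideal.mul_mem_left _ _ (hq _)))))
      (ih' _ ?_)) (ih' _ ?_)) (ih' _ ?_)
    all_goals
      rw [← hw, hm]
      simp only [map_add, Finsupp.weight_single, redWt, smul_eq_mul]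
      omega
  · push Not at hs
    obtain ⟨i, j, l, hij, hjl, h1, h2, h3, h4⟩ := hs
    obtain ⟨m, hm⟩ := sub (Finsupp.single z 1 + Finsupp.single (a i) 1 + Finsupp.single (b j) 1
        + Finsupp.single (c l) 1) (by
      intro v; cases v <;> simp [Finsupp.single_apply] <;> (try split_ifs) <;> (try subst_vars) <;> omega)
    have e : monomial s (1 : k) = monomial m 1 * ((X (a j) * X (b l) - X (a l) * X (b j)) * qAt X i
          + (X (a l) * X (b i) - X (a i) * X (b l)) * qAt X j
          + (X (a i) * X (b j) - X (a j) * X (b i)) * qAt X l)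
        + monomial m 1 * (X z * X (a j) * X (b i) * X (c l))
        + monomial m 1 * (X z * X (a i) * X (b l) * X (c j))
        + monomial m 1 * (X z * X (a l) * X (b j) * X (c i))
        - monomial m 1 * (X z * X (a l) * X (b i) * X (c j))
        - monomial m 1 * (X z * X (a j) * X (b l) * X (c i)) := by
      rw [hm, ← hXXXX]; simp only [qAt]; ring
    have hij' : (i : ℕ) < j := hij
    have hjl' : (j : ℕ) < l := hjl
    rw [e, hXXXX, hXXXX, hXXXX, hXXXX, hXXXX]
    refine Submodule.sub_mem _ (Submodule.sub_mem _ (Submodule.add_mem _ (Submodule.add_mem _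
      (Submodule.add_mem _ (hI _ (Ideal.mul_mem_left _ _
      (Ideal.add_mem _ (Ideal.add_mem _ (Ideal.mul_mem_left _ _ (hq _)) (Ideal.mul_mem_left _ _ (hq _)))
        (Ideal.mul_mem_left _ _ (hq _)))))
      (ih' _ ?_)) (ih' _ ?_)) (ih' _ ?_)) (ih' _ ?_)) (ih' _ ?_)
    all_goals
      rw [← hw, hm]
      simp only [map_add, Finsupp.weight_single, redWt, smul_eq_mul]
      omega

lemma span_top : (genIdeal n k).restrictScalars k ⊔ stdSub n k = ⊤ := by
  rw [eq_top_iff]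
  intro f _
  rw [f.as_sum]
  refine Submodule.sum_mem _ fun s _ => ?_
  have : monomial s (coeff s f) = coeff s f • monomial s (1 : k) := by
    rw [smul_monomial, smul_eq_mul, mul_one]
  rw [this]
  exact Submodule.smul_mem _ _ (span_aux s)
end GV

end PartG3

section PartG4

open scoped Polynomial


lemma AB_lemma {n : ℕ} (α β α' β' : Fin n → ℕ) (D : Fin n → Prop)
    (hD : ∀ j, ¬ D j → β j = β' j) (hadd : ∀ i, α i + β i = α' i + β' i)
    (hsum : ∑ i, β i = ∑ i, β' i)
    (h1 : ∀ i j, i < j → D j → α i = 0 ∨ β j = 0)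
    (h2 : ∀ i j, i < j → D j → α' i = 0 ∨ β' j = 0) : ∀ i, β i = β' i := by
  classical
  by_contra! hne
  let S := Finset.univ.filter (fun i => β i ≠ β' i)
  have hS : S.Nonempty := by
    obtain ⟨i, hi⟩ := hne
    exact ⟨i, by simp [S, hi]⟩
  obtain ⟨i0, hi0, hmin⟩ := Finset.exists_min_image S id hS
  simp only [S, Finset.mem_filter, Finset.mem_univ, true_and, id] at hi0 hmin
  have aux : ∀ (α β α' β' : Fin n → ℕ), (∀ j, ¬ D j → β j = β' j) →
      (∀ i, α i + β i = α' i + β' i) → (∀ i j, i < j → D j → α i = 0 ∨ β j = 0) →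
      (∀ j, β j ≠ β' j → i0 ≤ j) → β i0 < β' i0 → ∑ i, β i < ∑ i, β' i := by
    intro α β α' β' hD hadd h1 hmin hlt
    apply Finset.sum_lt_sum
    · intro j _
      by_cases hj : β j = β' j
      · exact hj.le
      rcases (hmin j hj).eq_or_lt with h | h
      · rw [← h]; exact hlt.le
      · have hDj : D j := by by_contra h'; exact hj (hD j h')
        have := hadd i0
        rcases h1 i0 j h hDj with h | h <;> omega
    · exact ⟨i0, Finset.mem_univ _, hlt⟩
  rcases lt_or_gt_of_ne hi0 with h | h
  · exact absurd hsum (aux α β α' β' hD hadd h1 hmin h).ne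
  · exact absurd hsum (aux α' β' α β (fun j hj => (hD j hj).symm) (fun i => (hadd i).symm) h2
      (fun j hj => hmin j hj.symm) h).ne'

namespace GV
open MvPolynomial
variable {n : ℕ} {k : Type u} [Field k]

/-- restrict to a torus component through a given monomial -/
lemma comp_reduce (d : GV n → ℕ) (hd : Tor d) (f : MvPolynomial (GV n) k)
    (hf : f ∈ goodIdeal n k) (s0 : GV n →₀ ℕ) (hs0 : s0 ∈ f.support) :
    ∃ g ∈ goodIdeal n k, s0 ∈ g.support ∧ ∀ s ∈ g.support, s ∈ f.support ∧
      Finsupp.weight d s = Finsupp.weight d s0 := by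
  classical
  refine ⟨weightedHomogeneousComponent d (Finsupp.weight d s0) f, good_component d hd f _ hf, ?_, ?_⟩
  · rw [mem_support_iff, coeff_weightedHomogeneousComponent, if_pos rfl]
    exact mem_support_iff.1 hs0
  · intro s hs
    rw [mem_support_iff, coeff_weightedHomogeneousComponent] at hs
    split_ifs at hs with h
    · exact ⟨mem_support_iff.2 hs, h⟩
    · exact absurd rfl hs

/-- row degree -/
def dR : GV n → ℕ
  | x => 0 | y => 0 | z => 0 | a _ => 1 | b _ => 1 | c _ => 1

/-- `(x,z,b)` degree -/
def dB : GV n → ℕ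
  | x => 1 | y => 0 | z => 1 | a _ => 0 | b _ => 1 | c _ => 0

/-- `(x,y,z)` degree -/
def dZ : GV n → ℕ
  | x => 1 | y => 1 | z => 1 | a _ => 0 | b _ => 0 | c _ => 0

/-- degree in the first `m` rows -/
def dM (m : ℕ) : GV n → ℕ
  | x => 0 | y => 0 | z => 0
  | a i => if (i : ℕ) < m then 1 else 0
  | b i => if (i : ℕ) < m then 1 else 0
  | c i => if (i : ℕ) < m then 1 else 0

lemma tor_dR : Tor (dR (n := n)) := fun _ => ⟨rfl, rfl⟩
lemma tor_dB : Tor (dB (n := n)) := fun _ => ⟨rfl, rfl⟩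
lemma tor_dZ : Tor (dZ (n := n)) := fun _ => ⟨rfl, rfl⟩
lemma tor_dM (m : ℕ) : Tor (dM (n := n) m) := fun _ => ⟨rfl, rfl⟩

/-- point for step X -/
noncomputable def phX : GV n → (MvPolynomial (GV n) k)[X]
  | x => Polynomial.X
  | y => Polynomial.C (X y)
  | z => Polynomial.C (X z)
  | a i => Polynomial.C (- (X y * X (b i) + X z * X (c i)))
  | b i => Polynomial.C (X (b i)) * Polynomial.X
  | c i => Polynomial.C (X (c i)) * Polynomial.X

def dX : GV n → ℕ
  | x => 1 | y => 0 | z => 0 | a _ => 0 | b _ => 1 | c _ => 1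

/-- target exponents: forget one variable -/
noncomputable def tX : GV n → GV n →₀ ℕ
  | x => 0
  | y => Finsupp.single y 1
  | z => Finsupp.single z 1
  | a i => Finsupp.single (a i) 1
  | b i => Finsupp.single (b i) 1
  | c i => Finsupp.single (c i) 1

lemma stepX (f : MvPolynomial (GV n) k) (hf : f ∈ goodIdeal n k) (hstd : StdSupp f)
    (s0 : GV n →₀ ℕ) (hs0 : s0 ∈ f.support) : s0 x = 0 := by
  by_contra hx0
  obtain ⟨g, hg, hs0g, hsupp⟩ := comp_reduce dR tor_dR f hf s0 hs0
  have hR : ∀ s ∈ g.support, ∑ i, s (a i) + ∑ i, s (b i) + ∑ i, s (c i) =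
      ∑ i, s0 (a i) + ∑ i, s0 (b i) + ∑ i, s0 (c i) := by
    intro s hs
    have := (hsupp s hs).2
    rw [weight_GV, weight_GV] at this
    simpa [dR] using this
  have hw : ∀ s : GV n →₀ ℕ, Finsupp.weight dX s = s x + ∑ i, s (b i) + ∑ i, s (c i) := by
    intro s; rw [weight_GV]; simp [dX]
  have ha0 : ∀ s ∈ g.support, s x ≠ 0 → ∀ i, s (a i) = 0 := fun s hs hx i =>
    ((hstd s (hsupp s hs).1).1 i).resolve_left hx
  have hmaxx : ∀ s ∈ g.support, (∀ s' ∈ g.support, Finsupp.weight dX s' ≤ Finsupp.weight dX s) →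
      (∀ i, s (a i) = 0) := by
    intro s hs hmax
    have h1 := hmax s0 hs0g
    have h2 := hR s hs
    have h3 : ∑ i, s0 (a i) = 0 := Finset.sum_eq_zero fun i _ => ha0 s0 hs0g hx0 i
    rw [hw, hw] at h1
    exact ha0 s hs (by omega)
  refine top_contra g (by rintro rfl; simp at hs0g) phX dX ?_ ?_ tX (fun _ => 1) x rfl rfl
    (fun _ => one_ne_zero) ?_ ?_ ?_
  · intro v
    cases v <;> simp only [phX, dX]
    · exact Polynomial.natDegree_X_le
    · simp
    · simp
    · exact (Polynomial.natDegree_C _).le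
    · simp
    · simp
  · refine eval_of_pi _ ?_ ?_ g hg.1
    · exact Polynomial.X_ne_zero
    · intro i; simp only [qAt, phX, map_neg, map_add, map_mul]; ring
  · simp [phX, dX]
  · intro M s hs hM hmax v hv hvx
    have := hmaxx s hs (hM ▸ hmax)
    cases v with
    | x => exact absurd rfl hvx
    | y => simp [phX, dX, tX, X]
    | z => simp [phX, dX, tX, X]
    | a i => exact absurd (this i) hv
    | b i => simp [phX, dX, tX, X]
    | c i => simp [phX, dX, tX, X]
  · intro M hmax s hs s' hs' hM hM'
    have ha := hmaxx s hs (hM ▸ hmax)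
    have ha' := hmaxx s' hs' (hM' ▸ hmax)
    have h1 := hR s hs
    have h1' := hR s' hs'
    have hsa : ∑ i, s (a i) = 0 := Finset.sum_eq_zero fun i _ => ha i
    have hsa' : ∑ i, s' (a i) = 0 := Finset.sum_eq_zero fun i _ => ha' i
    rw [hw] at hM hM'
    have hxx : s x = s' x := by omega
    refine ⟨hxx, fun h => ?_⟩
    ext w
    have h' := DFunLike.congr_fun h w
    rw [tsum_GV, tsum_GV] at h'
    cases w with
    | x => exact hxx
    | y => simpa [tX, Finsupp.single_apply] using h'
    | z => simpa [tX, Finsupp.single_apply] using h'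
    | a i => simp [ha i, ha' i]
    | b i => simpa [tX, Finsupp.single_apply] using h'
    | c i => simpa [tX, Finsupp.single_apply] using h'

/-- point for step Y -/
noncomputable def phY : GV n → (MvPolynomial (GV n) k)[X]
  | x => Polynomial.X
  | y => 1
  | z => Polynomial.C (X z)
  | a i => Polynomial.C (X (a i))
  | b i => Polynomial.C (- X (a i)) * Polynomial.X + Polynomial.C (- (X z * X (c i)))
  | c i => Polynomial.C (X (c i))

def dY : GV n → ℕ
  | x => 1 | y => 0 | z => 0 | a _ => 0 | b _ => 1 | c _ => 0

noncomputable def tY : GV n → GV n →₀ ℕ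
  | x => 0
  | y => 0
  | z => Finsupp.single z 1
  | a i => Finsupp.single (a i) 1
  | b i => Finsupp.single (a i) 1
  | c i => Finsupp.single (c i) 1

def eY (k : Type u) [Field k] : GV n → k
  | x => 1 | y => 1 | z => 1 | a _ => 1 | b _ => -1 | c _ => 1

def dYc : GV n → ℕ
  | x => 0 | y => 1 | z => 0 | a _ => 1 | b _ => 0 | c _ => 1

lemma tor_dYc : Tor (dYc (n := n)) := fun _ => ⟨rfl, rfl⟩

lemma stepY (f : MvPolynomial (GV n) k) (hf : f ∈ goodIdeal n k) (hstd : StdSupp f)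
    (s0 : GV n →₀ ℕ) (hs0 : s0 ∈ f.support) : s0 y = 0 := by
  by_contra hy0
  obtain ⟨g1, hg1, hs0g1, hsupp1⟩ := comp_reduce dR tor_dR f hf s0 hs0
  obtain ⟨g, hg, hs0g, hsupp⟩ := comp_reduce dYc tor_dYc g1 hg1 s0 hs0g1
  have hf' : ∀ s ∈ g.support, s ∈ f.support := fun s hs => (hsupp1 s (hsupp s hs).1).1
  have hx : ∀ s ∈ g.support, s x = 0 := fun s hs => stepX f hf hstd s (hf' s hs)
  have hR : ∀ s ∈ g.support, ∑ i, s (a i) + ∑ i, s (b i) + ∑ i, s (c i) =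
      ∑ i, s0 (a i) + ∑ i, s0 (b i) + ∑ i, s0 (c i) := by
    intro s hs
    have := (hsupp1 s (hsupp s hs).1).2
    rw [weight_GV, weight_GV] at this
    simpa [dR] using this
  have hR2 : ∀ s ∈ g.support, s y + ∑ i, s (a i) + ∑ i, s (c i) =
      s0 y + ∑ i, s0 (a i) + ∑ i, s0 (c i) := by
    intro s hs
    have := (hsupp s hs).2
    rw [weight_GV, weight_GV] at this
    simpa [dYc] using this
  have hw : ∀ s ∈ g.support, Finsupp.weight dY s = ∑ i, s (b i) := by
    intro s hs; rw [weight_GV]; simp [dY, hx s hs]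
  have hmaxx : ∀ s ∈ g.support, (∀ s' ∈ g.support, Finsupp.weight dY s' ≤ Finsupp.weight dY s) →
      (∀ i j, i < j → True → s (a i) = 0 ∨ s (b j) = 0) := by
    intro s hs hmax i j hij _
    have h1 := hmax s0 hs0g
    have h2 := hR s hs
    have h3 := hR2 s hs
    rw [hw s hs, hw s0 hs0g] at h1
    exact ((hstd s (hf' s hs)).2.1 i j hij).resolve_left (by omega)
  refine top_contra g (by rintro rfl; simp at hs0g) phY dY ?_ ?_ tY (eY k) y rfl rfl
    (by intro v; cases v <;> simp [eY]) ?_ ?_ ?_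
  · intro v
    cases v <;> simp only [phY, dY]
    · exact Polynomial.natDegree_X_le
    · simp
    · simp
    · simp
    · exact Polynomial.natDegree_linear_le
    · simp
  · refine eval_of_pi _ ?_ ?_ g hg.1
    · exact Polynomial.X_ne_zero
    · intro i; simp only [qAt, phY, map_neg, map_mul]; ring
  · simp [phY, dY]
  · intro M s hs hM hmax v hv hvx
    cases v with
    | x => exact absurd (hx s hs) hv
    | y => exact absurd rfl hvx
    | z => simp [phY, dY, tY, X, eY]
    | a i => simp [phY, dY, tY, X, eY]
    | b i => simp [phY, dY, tY, X, eY, Polynomial.coeff_C]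
    | c i => simp [phY, dY, tY, X, eY]
  · intro M hmax s hs s' hs' hM hM'
    have ha := hmaxx s hs (hM ▸ hmax)
    have ha' := hmaxx s' hs' (hM' ▸ hmax)
    have h1 := hR s hs
    have h1' := hR s' hs'
    have h2 := hR2 s hs
    have h2' := hR2 s' hs'
    rw [hw _ hs] at hM 
    rw [hw _ hs'] at hM'
    have hyy : s y = s' y := by omega
    refine ⟨hyy, fun h => ?_⟩
    have h' := fun w => DFunLike.congr_fun h w
    simp only [tsum_GV] at h'
    have hab : ∀ i, s (a i) + s (b i) = s' (a i) + s' (b i) := fun i => by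
      simpa [tY, Finsupp.single_apply] using h' (a i)
    have hb := AB_lemma (fun i => s (a i)) (fun i => s (b i)) (fun i => s' (a i)) (fun i => s' (b i))
      (fun _ => True) (by simp) hab (by omega) ha ha'
    ext w
    cases w with
    | x => rw [hx s hs, hx s' hs']
    | y => exact hyy
    | z => simpa [tY, Finsupp.single_apply] using h' z
    | a i => have h3 : s (b i) = s' (b i) := hb i; have h4 := hab i; omega
    | b i => exact hb i
    | c i => simpa [tY, Finsupp.single_apply] using h' (c i)
end GV

end PartG4

section PartG5

open scoped Polynomial


namespace GV
open MvPolynomial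
variable {n : ℕ} {k : Type u} [Field k]

noncomputable def phZ : GV n → (MvPolynomial (GV n) k)[X]
  | x => 0 | y => 0 | z => 0
  | a i => Polynomial.C (X (a i))
  | b i => Polynomial.C (X (b i))
  | c i => Polynomial.C (X (c i))

lemma stepZ0 (f : MvPolynomial (GV n) k) (hf : f ∈ goodIdeal n k) (hstd : StdSupp f)
    (s0 : GV n →₀ ℕ) (hs0 : s0 ∈ f.support) : s0 z ≠ 0 := by
  intro hz0
  obtain ⟨g, hg, hs0g, hsupp⟩ := comp_reduce dZ tor_dZ f hf s0 hs0
  have hx : ∀ s ∈ g.support, s x = 0 := fun s hs => stepX f hf hstd s (hsupp s hs).1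
  have hy : ∀ s ∈ g.support, s y = 0 := fun s hs => stepY f hf hstd s (hsupp s hs).1
  have hz : ∀ s ∈ g.support, s z = 0 := by
    intro s hs
    have := (hsupp s hs).2
    rw [weight_GV, weight_GV] at this
    simpa [dZ, hx s hs, hy s hs, hx s0 hs0g, hy s0 hs0g, hz0] using this
  have hev : aeval (phZ (n := n) (k := k)) g = 0 := eval_of_p _ rfl rfl rfl g hg.2
  have hcoe : aeval (phZ (n := n) (k := k)) g = Polynomial.C g := by
    rw [aeval_eq_sum_supp]
    conv_rhs => rw [g.as_sum, map_sum]
    refine Finset.sum_congr rfl fun s hs => ?_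
    have : (s.prod fun v m => (phZ v : (MvPolynomial (GV n) k)[X]) ^ m) =
        Polynomial.C (monomial s 1) := by
      rw [monomial_eq, map_one, one_mul, Finsupp.prod, Finsupp.prod, map_prod]
      refine Finset.prod_congr rfl fun v hv => ?_
      rw [map_pow]
      have hv' := Finsupp.mem_support_iff.1 hv
      cases v with
      | x => exact absurd (hx s hs) hv'
      | y => exact absurd (hy s hs) hv'
      | z => exact absurd (hz s hs) hv'
      | a i => rfl
      | b i => rfl
      | c i => rfl
    rw [this, IsScalarTower.algebraMap_apply k (MvPolynomial (GV n) k) _, Polynomial.algebraMap_apply,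
      Algebra.algebraMap_self, RingHom.id_apply, ← map_mul, MvPolynomial.algebraMap_eq, C_mul_monomial,
      mul_one]
  rw [hcoe, Polynomial.C_eq_zero] at hev
  rw [hev] at hs0g
  simp at hs0g

/-- point for the base of the last step -/
noncomputable def ph0 : GV n → (MvPolynomial (GV n) k)[X]
  | x => Polynomial.C (X z)
  | y => 0
  | z => Polynomial.C (X z)
  | a i => Polynomial.C (X (a i))
  | b i => Polynomial.C (X (b i))
  | c i => Polynomial.C (-X (a i))

/-- point for the last step -/
noncomputable def phM (m : ℕ) : GV n → (MvPolynomial (GV n) k)[X]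
  | x => Polynomial.C (X z) * Polynomial.X
  | y => Polynomial.C (-X z) * Polynomial.X
  | z => Polynomial.C (X z)
  | a i => if (i : ℕ) < m then Polynomial.C (X (a i)) * Polynomial.X else Polynomial.C (X (a i))
  | b i => if (i : ℕ) < m then Polynomial.C (X (a i)) * Polynomial.X + Polynomial.C (X (c i))
      else Polynomial.C (X (b i))
  | c i => if (i : ℕ) < m then Polynomial.C (X (c i)) * Polynomial.X
      else Polynomial.C (X (b i) - X (a i)) * Polynomial.X

def dP (m : ℕ) : GV n → ℕ
  | x => 1 | y => 1 | z => 0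
  | a i => if (i : ℕ) < m then 1 else 0
  | b i => if (i : ℕ) < m then 1 else 0
  | c _ => 1

noncomputable def tM (m : ℕ) : GV n → GV n →₀ ℕ
  | x => 0
  | y => 0
  | z => Finsupp.single z 1
  | a i => Finsupp.single (a i) 1
  | b i => if (i : ℕ) < m then Finsupp.single (a i) 1 else Finsupp.single (b i) 1
  | c i => if (i : ℕ) < m then Finsupp.single (c i) 1 else 0

lemma tM_ba (m : ℕ) (i j : Fin n) : tM m (b j) (a i) = if j = i then (if (i : ℕ) < m then 1 else 0) else 0 := by
  by_cases h : j = i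
  · subst h; by_cases h2 : (j : ℕ) < m <;> simp [tM, h2]
  · by_cases h2 : (j : ℕ) < m <;> simp [tM, h2, Finsupp.single_apply, h]

lemma tM_bb (m : ℕ) (i j : Fin n) : tM m (b j) (b i) = if j = i then (if (i : ℕ) < m then 0 else 1) else 0 := by
  by_cases h : j = i
  · subst h; by_cases h2 : (j : ℕ) < m <;> simp [tM, h2]
  · by_cases h2 : (j : ℕ) < m <;> simp [tM, h2, Finsupp.single_apply, h]

lemma tM_bc (m : ℕ) (i j : Fin n) : tM m (b j) (c i) = 0 := by
  by_cases h2 : (j : ℕ) < m <;> simp [tM, h2]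

lemma tM_ca (m : ℕ) (i j : Fin n) : tM m (c j) (a i) = 0 := by
  by_cases h2 : (j : ℕ) < m <;> simp [tM, h2]

lemma tM_cb (m : ℕ) (i j : Fin n) : tM m (c j) (b i) = 0 := by
  by_cases h2 : (j : ℕ) < m <;> simp [tM, h2]

lemma tM_cc (m : ℕ) (i j : Fin n) : tM m (c j) (c i) = if j = i then (if (i : ℕ) < m then 1 else 0) else 0 := by
  by_cases h : j = i
  · subst h; by_cases h2 : (j : ℕ) < m <;> simp [tM, h2]
  · by_cases h2 : (j : ℕ) < m <;> simp [tM, h2, Finsupp.single_apply, h]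

lemma natDegree_C_mul_X_le' {R : Type*} [CommRing R] (p : R) :
    (Polynomial.C p * Polynomial.X).natDegree ≤ 1 := by
  simpa using Polynomial.natDegree_C_mul_X_pow_le p 1

lemma stepM0 (f : MvPolynomial (GV n) k) (hf : f ∈ goodIdeal n k) (hstd : StdSupp f)
    (hm : ∀ s ∈ f.support, ∀ i, s (c i) = 0) : f = 0 := by
  by_contra hf0
  have hx : ∀ s ∈ f.support, s x = 0 := stepX f hf hstd
  have hy : ∀ s ∈ f.support, s y = 0 := stepY f hf hstd
  refine top_contra f hf0 ph0 (fun _ => 0) ?_ ?_ tX (fun _ => 1) x rfl rfl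
    (fun _ => one_ne_zero) ?_ ?_ ?_
  · intro v
    cases v <;> simp only [ph0] <;> simp
  · refine eval_of_pi _ ?_ ?_ f hf.1
    · simp [ph0]
    · intro i; simp only [qAt, ph0, map_neg]; ring
  · simp [ph0]
  · intro M s hs hM hmax v hv hvx
    cases v with
    | x => exact absurd rfl hvx
    | y => exact absurd (hy s hs) hv
    | z => simp [ph0, tX, X]
    | a i => simp [ph0, tX, X]
    | b i => simp [ph0, tX, X]
    | c i => exact absurd (hm s hs i) hv
  · intro M hmax s hs s' hs' hM hM'
    refine ⟨by rw [hx s hs, hx s' hs'], fun h => ?_⟩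
    have h' := fun w => DFunLike.congr_fun h w
    simp only [tsum_GV] at h'
    ext w
    cases w with
    | x => rw [hx s hs, hx s' hs']
    | y => rw [hy s hs, hy s' hs']
    | z => simpa [tX, Finsupp.single_apply] using h' z
    | a i => simpa [tX, Finsupp.single_apply] using h' (a i)
    | b i => simpa [tX, Finsupp.single_apply] using h' (b i)
    | c i => rw [hm s hs, hm s' hs']

lemma stepM (m : ℕ) (f : MvPolynomial (GV n) k) (hf : f ∈ goodIdeal n k) (hstd : StdSupp f)
    (hm : ∀ s ∈ f.support, ∀ i : Fin n, m ≤ i → s (c i) = 0) : f = 0 := by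
  induction m generalizing f with
  | zero => exact stepM0 f hf hstd fun s hs i => hm s hs i (Nat.zero_le _)
  | succ m ih =>
  refine ih f hf hstd ?_
  intro s0 hs0 i0 hi0
  rcases hi0.eq_or_lt with hi0 | hi0
  swap
  · exact hm s0 hs0 i0 hi0
  by_contra hc0
  obtain ⟨g1, hg1, hs0g1, hsupp1⟩ := comp_reduce dB tor_dB f hf s0 hs0
  obtain ⟨g, hg, hs0g, hsupp⟩ := comp_reduce (dM m) (tor_dM m) g1 hg1 s0 hs0g1
  have hf' : ∀ s ∈ g.support, s ∈ f.support := fun s hs => (hsupp1 s (hsupp s hs).1).1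
  have hx : ∀ s ∈ g.support, s x = 0 := fun s hs => stepX f hf hstd s (hf' s hs)
  have hy : ∀ s ∈ g.support, s y = 0 := fun s hs => stepY f hf hstd s (hf' s hs)
  have hz : ∀ s ∈ g.support, s z ≠ 0 := fun s hs => stepZ0 f hf hstd s (hf' s hs)
  have hB : ∀ s ∈ g.support, s z + ∑ i, s (b i) = s0 z + ∑ i, s0 (b i) := by
    intro s hs
    have := (hsupp1 s (hsupp s hs).1).2
    rw [weight_GV, weight_GV] at this
    simpa [dB, hx s hs, hx s0 hs0g] using this
  have hcc : ∀ s ∈ g.support, ∀ i : Fin n, m < i → s (c i) = 0 := fun s hs i hi =>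
    hm s (hf' s hs) i hi
  have hw : ∀ s ∈ g.support, Finsupp.weight (dP m) s = Finsupp.weight (dM m) s + s (c i0) := by
    intro s hs
    have h1 : ∑ i, s (c i) = ∑ i : Fin n, s (c i) * (if (i : ℕ) < m then 1 else 0) + s (c i0) := by
      have h2 : s (c i0) = ∑ i : Fin n, s (c i) * (if i = i0 then 1 else 0) := by simp
      rw [h2, ← Finset.sum_add_distrib]
      refine Finset.sum_congr rfl fun i _ => ?_
      by_cases h3 : (i : ℕ) < m
      · have : i ≠ i0 := by rintro rfl; omega
        simp [h3, this]
      · by_cases h4 : i = i0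
        · simp [h4, ← hi0]
        · have : m < (i : ℕ) := by
            rcases Nat.lt_or_ge m i with h | h
            · exact h
            · exact absurd (Fin.ext (by omega)) h4
          simp [hcc s hs i this]
    rw [weight_GV, weight_GV]
    simp only [dP, dM, hx s hs, hy s hs, mul_one, mul_zero, zero_mul]
    rw [h1]; omega
  have hM0 : ∀ s ∈ g.support, Finsupp.weight (dM m) s = Finsupp.weight (dM m) s0 :=
    fun s hs => (hsupp s hs).2
  have hmaxx : ∀ s ∈ g.support, (∀ s' ∈ g.support, Finsupp.weight (dP m) s' ≤ Finsupp.weight (dP m) s) →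
      (∀ i j : Fin n, i < j → (j : ℕ) < m → s (a i) = 0 ∨ s (b j) = 0) := by
    intro s hs hmax i j hij hj
    have h1 := hmax s0 hs0g
    have h2 := hM0 s hs
    rw [hw s hs, hw s0 hs0g] at h1
    have h3 : s (c i0) ≠ 0 := by omega
    have h4 := (hstd s (hf' s hs)).2.2 i j i0 hij (by rw [Fin.lt_def]; omega)
    have h5 := hz s hs
    tauto
  refine top_contra g (by rintro rfl; simp at hs0g) (phM m) (dP m) ?_ ?_ (tM m) (fun _ => 1) (c i0)
    (by simp [tM, ← hi0]) rfl (fun _ => one_ne_zero) ?_ ?_ ?_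
  · intro v
    cases v <;> simp only [phM, dP]
    · exact natDegree_C_mul_X_le' _
    · exact natDegree_C_mul_X_le' _
    · simp
    · split_ifs
      · exact natDegree_C_mul_X_le' _
      · simp
    · split_ifs
      · exact Polynomial.natDegree_linear_le
      · simp
    · split_ifs
      · exact natDegree_C_mul_X_le' _
      · exact natDegree_C_mul_X_le' _
  · refine eval_of_pi _ ?_ ?_ g hg.1
    · simp [phM]
    · intro i
      simp only [qAt, phM]
      split_ifs <;> simp only [map_neg, map_sub] <;> ring
  · have : (X (b i0) - X (a i0) : MvPolynomial (GV n) k) ≠ 0 := by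
      rw [sub_ne_zero]
      intro h
      have := X_injective h
      simp at this
    simpa [phM, dP, ← hi0] using this
  · intro M s hs hM hmax v hv hvx
    cases v with
    | x => exact absurd (hx s hs) hv
    | y => exact absurd (hy s hs) hv
    | z => simp [phM, dP, tM, X]
    | a i => by_cases h : (i : ℕ) < m <;> simp [phM, dP, tM, X, h]
    | b i => by_cases h : (i : ℕ) < m <;> simp [phM, dP, tM, X, h, Polynomial.coeff_C]
    | c i =>
      by_cases h : (i : ℕ) < m
      · simp [phM, dP, tM, X, h]
      · have h1 : (i : ℕ) ≠ m := fun h' => hvx (congrArg c (Fin.ext (by omega)))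
        exact absurd (hcc s hs i (by omega)) hv
  · intro M hmax s hs s' hs' hM hM'
    have ha := hmaxx s hs (hM ▸ hmax)
    have ha' := hmaxx s' hs' (hM' ▸ hmax)
    have h2 := hM0 s hs
    have h2' := hM0 s' hs'
    rw [hw _ hs] at hM 
    rw [hw _ hs'] at hM'
    have hcc0 : s (c i0) = s' (c i0) := by omega
    refine ⟨hcc0, fun h => ?_⟩
    have h' := fun w => DFunLike.congr_fun h w
    simp only [tsum_GV] at h'
    have hzz : s z = s' z := by
      have := h' z
      simp only [tM, apply_ite (fun f : GV n →₀ ℕ => f z)] at this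
      simpa [Finsupp.single_apply] using this
    have hab : ∀ i, (s (a i) + if (i : ℕ) < m then s (b i) else 0)
        = s' (a i) + if (i : ℕ) < m then s' (b i) else 0 := fun i => by
      have := h' (a i)
      simp only [tM_ba, tM_ca] at this
      simpa [tM, Finsupp.single_apply] using this
    have hbb : ∀ i : Fin n, ¬ (i : ℕ) < m → s (b i) = s' (b i) := fun i hi => by
      have := h' (b i)
      simp only [tM_bb, tM_cb] at this
      simpa [tM, Finsupp.single_apply, hi] using this
    have hccc : ∀ i : Fin n, (i : ℕ) < m → s (c i) = s' (c i) := fun i hi => by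
      have := h' (c i)
      simp only [tM_bc, tM_cc] at this
      simpa [tM, Finsupp.single_apply, hi] using this
    have hBs := hB s hs
    have hBs' := hB s' hs'
    have haux : ∀ i, s (a i) + s (b i) = s' (a i) + s' (b i) := by
      intro i
      have h3 := hab i
      split_ifs at h3 with hi
      · exact h3
      · have := hbb i hi; omega
    have hb := AB_lemma (fun i => s (a i)) (fun i => s (b i)) (fun i => s' (a i)) (fun i => s' (b i))
      (fun i => (i : ℕ) < m) hbb haux (by omega) ha ha'
    ext w
    cases w with
    | x => rw [hx s hs, hx s' hs']
    | y => rw [hy s hs, hy s' hs']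
    | z => exact hzz
    | a i => have h3 : s (b i) = s' (b i) := hb i; have h4 := haux i; omega
    | b i => exact hb i
    | c i =>
      rcases lt_trichotomy (i : ℕ) m with h3 | h3 | h3
      · exact hccc i h3
      · have : i = i0 := Fin.ext (by omega)
        rw [this]; exact hcc0
      · rw [hcc s hs i h3, hcc s' hs' i h3]

/-- The quadrics generate the intersection of the two primes, and standard monomials are
independent modulo it. -/
lemma good_std_eq_zero (f : MvPolynomial (GV n) k) (hf : f ∈ goodIdeal n k) (hstd : StdSupp f) :
    f = 0 :=
  stepM n f hf hstd fun _ _ i hi => absurd i.2 (by omega)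

lemma genIdeal_eq_good : genIdeal n k = goodIdeal n k := by
  refine le_antisymm genIdeal_le_good fun f hf => ?_
  have h : f ∈ (genIdeal n k).restrictScalars k ⊔ stdSub n k := by rw [span_top]; trivial
  obtain ⟨p, hp, q, hq, rfl⟩ := Submodule.mem_sup.1 h
  have hq' : q ∈ goodIdeal n k := by
    have := Ideal.sub_mem _ hf (genIdeal_le_good hp)
    simpa using this
  rw [good_std_eq_zero q hq' hq, add_zero]
  exact hp

lemma genIdeal_isCompl : IsCompl ((genIdeal n k).restrictScalars k) (stdSub n k) := by
  refine ⟨?_, codisjoint_iff.2 span_top⟩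
  rw [Submodule.disjoint_def]
  intro f hf hs
  exact good_std_eq_zero f (genIdeal_le_good hf) hs
end GV

end PartG5

section PartG6

open scoped Polynomial
open CategoryTheory


namespace GV
open MvPolynomial
variable {n : ℕ} {k : Type u} [Field k]

lemma smulRegular_gen (l : MvPolynomial (GV n) k) (h1 : aeval (piV k) l ≠ 0)
    (h2 : aeval (pV k) l ≠ 0) : IsSMulRegular (MvPolynomial (GV n) k ⧸ genIdeal n k) l := by
  refine IsSMulRegular.of_right_eq_zero_of_smul fun m hm => ?_
  obtain ⟨g, rfl⟩ := Ideal.Quotient.mk_surjective m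
  have hm' : Ideal.Quotient.mk (genIdeal n k) (l * g) = 0 := by
    rw [map_mul]; exact hm
  rw [Ideal.Quotient.eq_zero_iff_mem, genIdeal_eq_good, mem_goodIdeal, map_mul, map_mul] at hm'
  rw [Ideal.Quotient.eq_zero_iff_mem, genIdeal_eq_good, mem_goodIdeal]
  exact ⟨(mul_eq_zero.1 hm'.1).resolve_left h1, (mul_eq_zero.1 hm'.2).resolve_left h2⟩

/-- the two special variables -/
def Sp (i0 : Fin n) (v : GV n) : Prop := v = b i0 ∨ v = c i0

lemma std_add (i0 : Fin n) (hi0 : (i0 : ℕ) = 0) (s t : GV n →₀ ℕ) (hs : ∀ v, ¬ Sp i0 v → s v = 0)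
    (ht : Std t) : Std (s + t) := by
  have hx : s x = 0 := hs _ (by simp [Sp])
  have hy : s y = 0 := hs _ (by simp [Sp])
  have hz : s z = 0 := hs _ (by simp [Sp])
  have ha : ∀ i, s (a i) = 0 := fun i => hs _ (by simp [Sp])
  have hb : ∀ i j : Fin n, i < j → s (b j) = 0 := fun i j hij => hs _ (by
    have : (i : ℕ) < j := hij
    simp [Sp, Fin.ext_iff]; omega)
  have hc : ∀ i j : Fin n, i < j → s (c j) = 0 := fun i j hij => hs _ (by
    have : (i : ℕ) < j := hij
    simp [Sp, Fin.ext_iff]; omega)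
  refine ⟨fun i => ?_, fun i j hij => ?_, fun i j l hij hjl => ?_⟩
  · simpa [hx, ha] using ht.1 i
  · simpa [hy, ha, hb i j hij] using ht.2.1 i j hij
  · simpa [hz, ha, hb i j hij, hc j l hjl] using ht.2.2 i j l hij hjl

lemma std_mul (i0 : Fin n) (hi0 : (i0 : ℕ) = 0) (r : MvPolynomial {v // Sp i0 v} k)
    (f : MvPolynomial (GV n) k) (hf : f ∈ stdSub n k) :
    rename Subtype.val r * f ∈ stdSub n k := by
  classical
  intro s hs
  obtain ⟨s1, h1, t, h2, rfl⟩ := Finset.mem_add.1 (support_mul _ _ hs)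
  rw [support_rename_of_injective Subtype.val_injective] at h1
  obtain ⟨s1', _, rfl⟩ := Finset.mem_image.1 h1
  refine std_add i0 hi0 _ _ (fun v hv => ?_) (hf t h2)
  apply Finsupp.mapDomain_of_notMem_range
  simpa using hv

lemma pd_gen (hn : 0 < n) :
    HasProjectiveDimensionLE (ModuleCat.of (MvPolynomial (GV n) k)
      (MvPolynomial (GV n) k ⧸ genIdeal n k)) (3 * n + 1) := by
  classical
  let i0 : Fin n := ⟨0, hn⟩
  let B := MvPolynomial {v // Sp i0 v} k
  let : Algebra B (MvPolynomial (GV n) k) := (rename Subtype.val).toAlgebra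
  have hdef : ∀ r : B, algebraMap B (MvPolynomial (GV n) k) r = rename Subtype.val r := fun _ => rfl
  let e0 : MvPolynomial {v // ¬ Sp i0 v} B ≃ₐ[k] MvPolynomial (GV n) k :=
    (sumAlgEquiv k {v // ¬ Sp i0 v} {v // Sp i0 v}).symm.trans
      (renameEquiv k ((Equiv.sumComm _ _).trans (Equiv.sumCompl (Sp i0))))
  have he0 : ∀ r : B, e0 (C r) = rename Subtype.val r := by
    intro r
    have : ∀ r : B, (sumAlgEquiv k {v // ¬ Sp i0 v} {v // Sp i0 v}).symm (C r) =
      rename Sum.inr r := by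
      intro r
      rw [AlgEquiv.symm_apply_eq]
      induction r using MvPolynomial.induction_on with
      | C a => rw [rename_C, sumAlgEquiv_C_inl]
      | add p q hp hq => simp only [map_add, hp, hq]
      | mul_X p i hp => simp only [map_mul, hp, rename_X, sumAlgEquiv_X_inr]
    simp only [e0, AlgEquiv.trans_apply, this, renameEquiv_apply, rename_rename]
    rfl
  let e : MvPolynomial {v // ¬ Sp i0 v} B ≃ₐ[B] MvPolynomial (GV n) k :=
    AlgEquiv.ofRingEquiv (f := e0.toRingEquiv) he0
  have hfree : Module.Free B (MvPolynomial (GV n) k) := Module.Free.of_equiv e.toLinearEquiv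
  let stdB : Submodule B (MvPolynomial (GV n) k) :=
    { stdSub n k with
      smul_mem' := fun r f hf => by
        rw [Algebra.smul_def]; exact std_mul i0 rfl r f hf }
  have hc : IsCompl ((genIdeal n k).restrictScalars B) stdB := by
    constructor
    · rw [Submodule.disjoint_def]
      intro f hf hs
      exact (Submodule.disjoint_def.1 genIdeal_isCompl.1) f hf hs
    · rw [codisjoint_iff, eq_top_iff]
      intro f _
      have h : f ∈ (genIdeal n k).restrictScalars k ⊔ stdSub n k := by rw [span_top]; trivial
      obtain ⟨p, hp, q, hq, rfl⟩ := Submodule.mem_sup.1 h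
      exact Submodule.mem_sup.2 ⟨p, hp, q, hq, rfl⟩
  let E1 : (MvPolynomial (GV n) k ⧸ (genIdeal n k).restrictScalars B) ≃ₗ[B]
    (MvPolynomial (GV n) k ⧸ genIdeal n k) := Submodule.Quotient.restrictScalarsEquiv B _
  have hproj0 : Module.Projective B (MvPolynomial (GV n) k ⧸ (genIdeal n k).restrictScalars B) := by
    refine Module.Projective.of_split
      (stdB.subtype ∘ₗ (Submodule.quotientEquivOfIsCompl _ _ hc).toLinearMap)
      (Submodule.mkQ _) ?_
    refine LinearMap.ext fun f => ?_
    exact Submodule.mk_quotientEquivOfIsCompl_apply hc f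
  have hproj : Module.Projective B (MvPolynomial (GV n) k ⧸ genIdeal n k) :=
    Module.Projective.of_equiv E1
  refine pdLE_mvPolynomial' _ e _ (3 * n + 1) ?_
  rw [Fintype.card_subtype_compl, card_GV, Fintype.card_subtype]
  have : ({v | Sp i0 v} : Finset (GV n)) = {b i0, c i0} := by
    ext v; simp only [Finset.mem_filter_univ, Finset.mem_insert, Finset.mem_singleton]; rfl
  rw [this, Finset.card_pair (by simp)]
  omega
end GV

end PartG6

section PartC1

open scoped Polynomial TensorProduct
open CategoryTheory


open MvPolynomial

lemma linforms_ext {k : Type u} [Field k] {N : ℕ} {M : Type*} [AddCommGroup M] [Module k M]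
    (f g : homogeneousSubmodule (Fin N) k 1 →ₗ[k] M)
    (h : ∀ i, f ⟨X i, isHomogeneous_X k i⟩ = g ⟨X i, isHomogeneous_X k i⟩) : f = g := by
  ext ⟨p, hp⟩
  have hp' : p ∈ Submodule.span k (Set.range (X : Fin N → MvPolynomial (Fin N) k)) := by
    rwa [homogeneousSubmodule_one_eq_span_X] at hp
  induction hp' using Submodule.span_induction with
  | mem p hpp => obtain ⟨i, rfl⟩ := hpp; exact h i
  | zero => exact (map_zero f).trans (map_zero g).symm
  | add p q hp1 hq1 h1 h2 =>
    have hp2 : p ∈ homogeneousSubmodule (Fin N) k 1 := by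
      rwa [homogeneousSubmodule_one_eq_span_X]
    have hq2 : q ∈ homogeneousSubmodule (Fin N) k 1 := by
      rwa [homogeneousSubmodule_one_eq_span_X]
    have h3 := h1 hp2
    have h4 := h2 hq2
    have : (⟨p + q, hp⟩ : homogeneousSubmodule (Fin N) k 1) = ⟨p, hp2⟩ + ⟨q, hq2⟩ := rfl
    rw [this, map_add, map_add, h3, h4]
  | smul c p hp1 h1 =>
    have hp2 : p ∈ homogeneousSubmodule (Fin N) k 1 := by
      rwa [homogeneousSubmodule_one_eq_span_X]
    have h3 := h1 hp2
    have : (⟨c • p, hp⟩ : homogeneousSubmodule (Fin N) k 1) = c • ⟨p, hp2⟩ := rfl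
    rw [this, map_smul, map_smul, h3]

lemma coordEquiv {k : Type u} [Field k] {N : ℕ} {ι : Type*}
    (b : Module.Basis ι k (homogeneousSubmodule (Fin N) k 1)) :
    ∃ e : MvPolynomial ι k ≃ₐ[k] MvPolynomial (Fin N) k, ∀ i, e (X i) = b i := by
  let L : homogeneousSubmodule (Fin N) k 1 →ₗ[k] MvPolynomial ι k := b.constr k (X : ι → _)
  let F : MvPolynomial ι k →ₐ[k] MvPolynomial (Fin N) k :=
    aeval (fun i => ((b i : homogeneousSubmodule (Fin N) k 1) : MvPolynomial (Fin N) k))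
  let G : MvPolynomial (Fin N) k →ₐ[k] MvPolynomial ι k :=
    aeval (fun i => L ⟨X i, isHomogeneous_X k i⟩)
  have hFL : F.toLinearMap ∘ₗ L = Submodule.subtype _ := by
    apply b.ext
    intro i
    simp [L, F]
  have hGL : G.toLinearMap ∘ₗ Submodule.subtype _ = L := by
    apply linforms_ext
    intro i
    simp [G]
  refine ⟨AlgEquiv.ofAlgHom F G ?_ ?_, fun i => ?_⟩
  · ext1 i
    have := LinearMap.congr_fun hFL ⟨X i, isHomogeneous_X k i⟩
    simpa [G] using this
  · ext1 i
    have := LinearMap.congr_fun hGL (b i)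
    simpa [F, L] using this
  · simp [F]

lemma flat_aeval {k : Type u} [Field k] {N : ℕ} {ι : Type} (ψ : ι → MvPolynomial (Fin N) k)
    (h1 : ∀ i, ψ i ∈ homogeneousSubmodule (Fin N) k 1) (hli : LinearIndependent k ψ) :
    (aeval ψ : MvPolynomial ι k →ₐ[k] MvPolynomial (Fin N) k).toRingHom.Flat := by
  classical
  let ψ' : ι → homogeneousSubmodule (Fin N) k 1 := fun i => ⟨ψ i, h1 i⟩
  have hli' : LinearIndependent k ψ' :=
    LinearIndependent.of_comp (Submodule.subtype _) (by exact hli)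
  let E := Module.Basis.sumExtendIndex hli'
  let b : Module.Basis (ι ⊕ E) k _ := Module.Basis.sumExtend hli'
  have hb : ∀ i, b (Sum.inl i) = ψ' i := fun i => by
    simp [b, Module.Basis.sumExtend]
    rfl
  obtain ⟨e, he⟩ := coordEquiv b
  let : Algebra (MvPolynomial ι k) (MvPolynomial (Fin N) k) :=
    (aeval ψ : MvPolynomial ι k →ₐ[k] MvPolynomial (Fin N) k).toRingHom.toAlgebra
  let e0 : MvPolynomial E (MvPolynomial ι k) ≃ₐ[k] MvPolynomial (Fin N) k :=
    ((sumAlgEquiv k E ι).symm.trans (renameEquiv k (Equiv.sumComm _ _))).trans e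
  have he0 : ∀ r, e0 (C r) = aeval ψ r := by
    intro r
    induction r using MvPolynomial.induction_on with
    | C a => simp [e0]; exact e.commutes a
    | add p q hp hq => simp only [map_add, hp, hq]
    | mul_X p i hp =>
      simp only [map_mul, hp]; congr 1; simp [e0, he, hb, ψ']
  let e1 : MvPolynomial E (MvPolynomial ι k) ≃ₐ[MvPolynomial ι k] MvPolynomial (Fin N) k :=
    AlgEquiv.ofRingEquiv (f := e0.toRingEquiv) he0
  have hfree : Module.Free (MvPolynomial ι k) (MvPolynomial (Fin N) k) :=
    Module.Free.of_equiv e1.toLinearEquiv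
  change Module.Flat _ _
  infer_instance

end PartC1

section PartC2

open scoped Polynomial TensorProduct
open CategoryTheory


open MvPolynomial

lemma pdLE_quot_map_flat {A B : Type u} [CommRing A] [CommRing B] [Algebra A B] [Module.Flat A B]
    (I : Ideal A) (m : ℕ) (h : HasProjectiveDimensionLE (ModuleCat.of A (A ⧸ I)) m) :
    HasProjectiveDimensionLE (ModuleCat.of B (B ⧸ I.map (algebraMap A B))) m := by
  have h1 := pdLE_baseChange_flat (R' := B) m (A ⧸ I) h
  exact pdLE_transport (RingEquiv.refl B)
    (Algebra.TensorProduct.quotIdealMapEquivTensorQuot B I).symm.toAddEquiv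
    (fun r x => (Algebra.TensorProduct.quotIdealMapEquivTensorQuot B I).symm.toLinearEquiv.map_smul r x) m h1

namespace GV
variable {n : ℕ} {k : Type u} [Field k]

lemma map_span_qAt {A B : Type u} [CommRing A] [CommRing B] (F : A →+* B) (θ : GV n → A) :
    (Ideal.span (Set.range (qAt θ))).map F = Ideal.span (Set.range (qAt (F ∘ θ))) := by
  rw [Ideal.map_span, ← Set.range_comp]
  congr 2
  ext i
  simp [qAt]

lemma pd_step {N : ℕ} {ι : Type} (ψ : ι → MvPolynomial (Fin N) k)
    (h1 : ∀ i, ψ i ∈ homogeneousSubmodule (Fin N) k 1) (hli : LinearIndependent k ψ)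
    (θ : GV n → MvPolynomial ι k) (φ : GV n → MvPolynomial (Fin N) k)
    (hφ : ∀ v, φ v = aeval ψ (θ v)) (m : ℕ)
    (h : HasProjectiveDimensionLE (ModuleCat.of (MvPolynomial ι k)
      (MvPolynomial ι k ⧸ Ideal.span (Set.range (qAt θ)))) m) :
    HasProjectiveDimensionLE (ModuleCat.of (MvPolynomial (Fin N) k)
      (MvPolynomial (Fin N) k ⧸ Ideal.span (Set.range (qAt φ)))) m := by
  let : Algebra (MvPolynomial ι k) (MvPolynomial (Fin N) k) :=
    (aeval ψ : MvPolynomial ι k →ₐ[k] MvPolynomial (Fin N) k).toRingHom.toAlgebra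
  have : Module.Flat (MvPolynomial ι k) (MvPolynomial (Fin N) k) := flat_aeval ψ h1 hli
  have h2 := pdLE_quot_map_flat (B := MvPolynomial (Fin N) k) _ m h
  rw [map_span_qAt] at h2
  have : φ = algebraMap (MvPolynomial ι k) (MvPolynomial (Fin N) k) ∘ θ := funext hφ
  rw [this]
  exact h2

lemma pd_hyperplane (hn : 0 < n) (J : Set (GV n)) [Fintype J] (v0 : GV n) (hv0 : v0 ∉ J)
    (hx : v0 ≠ x) (hy : v0 ≠ y) (hz : v0 ≠ z)
    (hJ : ∀ v, v ≠ v0 → v ∈ J) (c0 : J → k)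
    (θ : GV n → MvPolynomial J k) (hθ : ∀ v : J, θ v = X v)
    (hθ0 : θ v0 = ∑ j, c0 j • X j) :
    HasProjectiveDimensionLE (ModuleCat.of (MvPolynomial J k)
      (MvPolynomial J k ⧸ Ideal.span (Set.range (qAt θ)))) (3 * n + 1) := by
  classical
  let Θ : MvPolynomial (GV n) k →ₐ[k] MvPolynomial J k := aeval θ
  let σ : MvPolynomial J k →ₐ[k] MvPolynomial (GV n) k := rename Subtype.val
  let : Algebra (MvPolynomial (GV n) k) (MvPolynomial J k) := Θ.toRingHom.toAlgebra
  have halg : ∀ f, algebraMap (MvPolynomial (GV n) k) (MvPolynomial J k) f = Θ f := fun _ => rfl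
  let l : MvPolynomial (GV n) k := X v0 - σ (θ v0)
  have hΘσ : ∀ f, Θ (σ f) = f := by
    intro f
    have : Θ.comp σ = AlgHom.id k _ := by ext1 i; simp [Θ, σ, hθ]
    exact DFunLike.congr_fun this f
  have hs : Function.Surjective (algebraMap (MvPolynomial (GV n) k) (MvPolynomial J k)) :=
    fun f => ⟨σ f, hΘσ f⟩
  have hk : RingHom.ker (algebraMap (MvPolynomial (GV n) k) (MvPolynomial J k)) =
      Ideal.span {l} := by
    apply le_antisymm
    · intro f hf
      have hf : Θ f = 0 := hf
      have : (Ideal.Quotient.mkₐ k (Ideal.span {l})).comp (σ.comp Θ) =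
          Ideal.Quotient.mkₐ k (Ideal.span {l}) := by
        ext1 v
        by_cases hv : v = v0
        · subst hv
          simp only [AlgHom.comp_apply, Θ, aeval_X]
          symm
          exact Ideal.Quotient.eq.2 (Ideal.mem_span_singleton_self l)
        · have := hθ ⟨v, hJ v hv⟩
          simp only [AlgHom.comp_apply, Θ, aeval_X]
          simp only at this
          rw [this]; simp [σ]
      have h2 := DFunLike.congr_fun this f
      simp only [AlgHom.comp_apply, hf, map_zero] at h2
      exact Ideal.Quotient.eq_zero_iff_mem.1 h2.symm
    · rw [Ideal.span_le, Set.singleton_subset_iff]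
      change Θ l = 0
      simp only [l, map_sub, hΘσ]
      simp [Θ]
  have hev : ∀ (w : GV n → k) (τ : GV n → MvPolynomial (GV n) k),
      aeval w (aeval τ l) = aeval w (τ v0) - ∑ j : J, c0 j * aeval w (τ j) := by
    intro w τ
    simp [l, hθ0, σ, map_sum]
  have hp : aeval (pV k) l ≠ 0 := by
    intro h0
    have h1 := hev (Pi.single v0 1) (pV k)
    have h2 : ∀ j : J, aeval (Pi.single v0 1 : GV n → k) (pV k (j : GV n)) = 0 := by
      rintro ⟨j, hj⟩
      have : j ≠ v0 := fun h => hv0 (h ▸ hj)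
      clear h1
      cases j <;> simp [pV, this]
    simp only [h0, map_zero, h2, mul_zero, Finset.sum_const_zero, sub_zero] at h1
    cases v0 with
    | x => exact hx rfl
    | y => exact hy rfl
    | z => exact hz rfl
    | a i => simp [pV] at h1
    | b i => simp [pV] at h1
    | c i => simp [pV] at h1
  have hpi : aeval (piV k) l ≠ 0 := by
    intro h0
    cases hv : v0 with
    | x => exact hx hv
    | y => exact hy hv
    | z => exact hz hv
    | a i =>
      have key : ∀ t : k, aeval ((Pi.single y t + Pi.single (b i) 1 : GV n → k)) (aeval (piV k) l) =
          - t - c0 ⟨b i, hJ _ (by simp [hv])⟩ := by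
        intro t
        rw [hev, Finset.sum_eq_single ⟨b i, hJ _ (by simp [hv])⟩]
        · simp [piV, hv]
        · rintro ⟨j, hj⟩ _ hne
          have h1 : j ≠ a i := fun h => hv0 (by rw [hv, ← h]; exact hj)
          have h2 : j ≠ b i := fun h => hne (by simp [h])
          cases j <;> simp_all [piV, Pi.single_apply]
        · simp
      have h1 := key 0
      have h2 := key 1
      rw [h0, map_zero] at h1 h2
      have : (1 : k) = 0 := by linear_combination h2 - h1
      exact one_ne_zero this
    | b i =>
      have h1 := hev (Pi.single v0 1) (piV k)
      have h2 : ∀ j : J, aeval (Pi.single v0 1 : GV n → k) (piV k (j : GV n)) = 0 := by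
        rintro ⟨j, hj⟩
        have : j ≠ v0 := fun h => hv0 (h ▸ hj)
        clear h1
        cases j <;> simp [piV, hv] <;>
          exact Pi.single_eq_of_ne (by rw [← hv]; exact this) _
      simp only [h0, map_zero, h2, mul_zero, Finset.sum_const_zero, sub_zero] at h1
      rw [hv] at h1
      simp [piV] at h1
    | c i =>
      have h1 := hev (Pi.single v0 1) (piV k)
      have h2 : ∀ j : J, aeval (Pi.single v0 1 : GV n → k) (piV k (j : GV n)) = 0 := by
        rintro ⟨j, hj⟩
        have : j ≠ v0 := fun h => hv0 (h ▸ hj)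
        clear h1
        cases j <;> simp [piV, hv] <;>
          exact Pi.single_eq_of_ne (by rw [← hv]; exact this) _
      simp only [h0, map_zero, h2, mul_zero, Finset.sum_const_zero, sub_zero] at h1
      rw [hv] at h1
      simp [piV] at h1
  have hl0 : l ≠ 0 := fun h => hp (by rw [h, map_zero])
  have hlr : IsSMulRegular (MvPolynomial (GV n) k) l :=
    IsSMulRegular.of_right_eq_zero_of_smul fun m hm =>
      (mul_eq_zero.1 (by simpa using hm)).resolve_left hl0
  have h1 := pdLE_baseChange_quot l hlr hs hk (3 * n + 1)
    (MvPolynomial (GV n) k ⧸ genIdeal n k) (smulRegular_gen l hpi hp) (pd_gen hn)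
  have h2 := pdLE_transport (RingEquiv.refl (MvPolynomial J k))
    (Algebra.TensorProduct.quotIdealMapEquivTensorQuot (MvPolynomial J k)
      (genIdeal n k)).symm.toAddEquiv
    (fun r x => (Algebra.TensorProduct.quotIdealMapEquivTensorQuot (MvPolynomial J k)
      (genIdeal n k)).symm.toLinearEquiv.map_smul r x) _ h1
  unfold genIdeal at h2
  rw [map_span_qAt] at h2
  have : θ = algebraMap (MvPolynomial (GV n) k) (MvPolynomial J k) ∘ X := by
    ext1 v; simp [halg, Θ]
  rw [this]
  exact h2

lemma pd_assembly (hn : 0 < n) {N : ℕ} (φ : GV n → MvPolynomial (Fin N) k)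
    (h1 : ∀ v, φ v ∈ homogeneousSubmodule (Fin N) k 1)
    (hli : LinearIndepOn k φ {x, y, z}) :
    HasProjectiveDimensionLE (ModuleCat.of (MvPolynomial (Fin N) k)
      (MvPolynomial (Fin N) k ⧸ Ideal.span (Set.range (qAt φ)))) (3 * n + 1) := by
  classical
  obtain ⟨J, _, hJ0, hJs, hJ⟩ := exists_linearIndepOn_extension hli (Set.subset_univ _)
  have hJs' : ∀ v, ∃ c0 : J → k, ∑ j, c0 j • φ j = φ v := by
    intro v
    rw [← Submodule.mem_span_range_iff_exists_fun]
    have := hJs ⟨v, trivial, rfl⟩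
    rwa [Set.image_eq_range] at this
  choose c0 hc0 using hJs'
  let θ : GV n → MvPolynomial J k := fun v => if h : v ∈ J then X ⟨v, h⟩ else ∑ j, c0 v j • X j
  have hθ : ∀ v : J, θ v = X v := fun v => by simp [θ]
  have hφθ : ∀ v, φ v = aeval (fun j : J => φ j) (θ v) := by
    intro v
    by_cases h : v ∈ J
    · simp [θ, h]
    · simp [θ, h, ← hc0 v, map_sum]
  by_cases hc1 : Fintype.card J ≤ 3 * n + 1
  · exact pd_step (fun j : J => φ j) (fun _ => h1 _) hJ θ φ hφθ _
      (pdLE_mvPolynomial' (B := k) _ AlgEquiv.refl _ _ hc1)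
  by_cases hall : ∀ v, v ∈ J
  · refine pd_step φ h1 ?_ X φ (fun v => by simp) _ (pd_gen hn)
    have : J = Set.univ := Set.eq_univ_of_forall hall
    rw [this, linearIndepOn_univ_iff] at hJ
    exact hJ
  push Not at hall
  obtain ⟨v0, hv0⟩ := hall
  refine pd_step (fun j : J => φ j) (fun _ => h1 _) hJ θ φ hφθ _
    (pd_hyperplane hn J v0 hv0 ?_ ?_ ?_ ?_ (c0 v0) θ hθ (by simp [θ, hv0]))
  · rintro rfl; exact hv0 (hJ0 (by simp))
  · rintro rfl; exact hv0 (hJ0 (by simp))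
  · rintro rfl; exact hv0 (hJ0 (by simp))
  · intro v hv
    by_contra hvJ
    have h3 : J.toFinset ⊆ (Finset.univ.erase v0).erase v := by
      intro w hw
      rw [Set.mem_toFinset] at hw
      simp only [Finset.mem_erase, Finset.mem_univ, and_true]
      exact ⟨fun h => hvJ (h ▸ hw), fun h => hv0 (h ▸ hw)⟩
    have h4 := Finset.card_le_card h3
    rw [Finset.card_erase_of_mem (by simp [hv]), Finset.card_erase_of_mem (by simp),
      Finset.card_univ, card_GV, Set.toFinset_card] at h4
    omega
end GV

end PartC2

section PartL1

open MvPolynomial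

section
variable {k : Type u} [Field k] {σ : Type*}

lemma hc_mul_add {g m : MvPolynomial σ k} {i : ℕ} (hg : g.IsHomogeneous i) (j : ℕ) :
    homogeneousComponent (i + j) (g * m) = g * homogeneousComponent j m := by
  conv_lhs => rw [← sum_homogeneousComponent m, Finset.mul_sum, map_sum]
  have : ∀ x, homogeneousComponent (i + j) (g * homogeneousComponent x m) =
      if x = j then g * homogeneousComponent j m else 0 := by
    intro x
    have h1 : g * homogeneousComponent x m ∈ homogeneousSubmodule σ k (i + x) :=
      hg.mul (homogeneousComponent_isHomogeneous x m)
    rw [homogeneousComponent_of_mem h1]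
    by_cases h : x = j
    · subst h; simp
    · rw [if_neg (by omega), if_neg h]
  simp only [this]
  rw [Finset.sum_ite_eq']
  split_ifs with h
  · rfl
  · rw [homogeneousComponent_eq_zero j m (by simpa using h), mul_zero]

lemma hc_mul_lt {g m : MvPolynomial σ k} {i d : ℕ} (hg : g.IsHomogeneous i) (hd : d < i) :
    homogeneousComponent d (g * m) = 0 := by
  conv_lhs => rw [← sum_homogeneousComponent m, Finset.mul_sum, map_sum]
  refine Finset.sum_eq_zero fun x _ => ?_
  have h1 : g * homogeneousComponent x m ∈ homogeneousSubmodule σ k (i + x) :=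
    hg.mul (homogeneousComponent_isHomogeneous x m)
  rw [homogeneousComponent_of_mem h1, if_neg (by omega)]

lemma homog_span {ι : Type*} (f : ι → MvPolynomial σ k) (d : ℕ) (hf : ∀ i, (f i).IsHomogeneous d) :
    ∀ g ∈ Ideal.span (Set.range f), ∀ e, homogeneousComponent e g ∈ Ideal.span (Set.range f) := by
  intro g hg e
  induction hg using Submodule.span_induction with
  | mem x hx =>
    obtain ⟨i, rfl⟩ := hx
    rw [homogeneousComponent_of_mem (hf i)]
    split_ifs
    · exact Ideal.subset_span ⟨i, rfl⟩
    · exact zero_mem _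
  | zero => simp
  | add x y _ _ hx hy => rw [map_add]; exact add_mem hx hy
  | smul a x hx' hx =>
    -- 
    have key : ∀ y ∈ Ideal.span (Set.range f), ∀ a' : MvPolynomial σ k, ∀ e,
        homogeneousComponent e (a' * y) ∈ Ideal.span (Set.range f) := by
      intro y hy
      induction hy using Submodule.span_induction with
      | mem x hx =>
        obtain ⟨i, rfl⟩ := hx
        intro a' e
        rw [mul_comm]
        by_cases h : d ≤ e
        · obtain ⟨j, rfl⟩ := Nat.exists_eq_add_of_le h
          rw [hc_mul_add (hf i)]
          exact Ideal.mul_mem_right _ _ (Ideal.subset_span ⟨i, rfl⟩)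
        · rw [hc_mul_lt (hf i) (by omega)]; exact zero_mem _
      | zero => simp
      | add x y _ _ hx hy => intro a' e; rw [mul_add, map_add]; exact add_mem (hx _ _) (hy _ _)
      | smul b x _ hx => intro a' e; rw [smul_eq_mul, ← mul_assoc]; exact hx _ _
    exact key x hx' a e

lemma homog_ann (I p : Ideal (MvPolynomial σ k))
    (hI : ∀ g ∈ I, ∀ e, homogeneousComponent e g ∈ I) (hp : p.IsPrime) (n : ℕ) :
    ∀ (m : MvPolynomial σ k) (T : Finset ℕ), T.card = n → (∀ j ∉ T, homogeneousComponent j m ∈ I) →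
    (∀ g, g ∈ p ↔ g * m ∈ I) → ∀ f ∈ p, ∀ e, homogeneousComponent e f ∈ p := by
  classical
  induction n with
  | zero =>
    intro m T hT hm hpm
    rw [Finset.card_eq_zero] at hT
    subst hT
    have : m ∈ I := by
      rw [← sum_homogeneousComponent m]
      exact sum_mem fun j _ => hm j (by simp)
    exact absurd ((Ideal.eq_top_iff_one p).2 ((hpm 1).2 (by simpa using this))) hp.ne_top
  | succ n ih =>
    intro m T hT hm hpm f hf
    by_contra! hcon
    have hmI : ∃ b, homogeneousComponent b m ∉ I := by
      by_contra! h
      have : m ∈ I := by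
        rw [← sum_homogeneousComponent m]
        exact sum_mem fun j _ => h j
      exact hp.ne_top ((Ideal.eq_top_iff_one p).2 ((hpm 1).2 (by simpa using this)))
    obtain ⟨e, he⟩ := hcon
    have hex : ∃ a, homogeneousComponent a f ∉ p := ⟨e, he⟩
    set a := Nat.find hex with ha
    have ha1 := Nat.find_spec hex
    have ha2 := fun i (h : i < Nat.find hex) => not_not.1 (Nat.find_min hex h)
    rw [← ha] at ha1 ha2
    set b := Nat.find hmI with hb
    have hb1 := Nat.find_spec hmI
    have hb2 := fun i (h : i < Nat.find hmI) => not_not.1 (Nat.find_min hmI h)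
    rw [← hb] at hb1 hb2
    have hbT : b ∈ T := by
      by_contra h
      exact hb1 (hm b h)
    have hfa := homogeneousComponent_isHomogeneous a f
    have key : homogeneousComponent a f * homogeneousComponent b m ∈ I := by
      have h1 := hI _ ((hpm f).1 hf) (a + b)
      have h2 : homogeneousComponent (a + b) (f * m) = ∑ i ∈ Finset.range (f.totalDegree + 1),
          homogeneousComponent (a + b) (homogeneousComponent i f * m) := by
        rw [← map_sum, ← Finset.sum_mul, sum_homogeneousComponent]
      rw [h2] at h1
      have haR : a ∈ Finset.range (f.totalDegree + 1) := by
        by_contra h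
        apply ha1
        rw [homogeneousComponent_eq_zero a f (by simpa using h)]; exact zero_mem _
      rw [← Finset.add_sum_erase _ _ haR, hc_mul_add hfa] at h1
      refine (Ideal.add_mem_iff_left _ ?_).1 h1
      refine sum_mem fun i hi => ?_
      rcases lt_or_gt_of_ne (Finset.ne_of_mem_erase hi) with h | h
      · exact hI _ ((hpm _).1 (ha2 i h)) _
      · by_cases h' : i ≤ a + b
        · obtain ⟨j, hj⟩ := Nat.exists_eq_add_of_le h'
          rw [hj, hc_mul_add (homogeneousComponent_isHomogeneous i f)]
          exact Ideal.mul_mem_left _ _ (hb2 j (by omega))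
        · rw [hc_mul_lt (homogeneousComponent_isHomogeneous i f) (by omega)]; exact zero_mem _
    refine he (ih (homogeneousComponent a f * m) ((T.erase b).image (a + ·)) ?_ ?_ ?_ f hf e)
    · rw [Finset.card_image_of_injective _ (add_right_injective a), Finset.card_erase_of_mem hbT, hT]
      rfl
    · intro j hj
      by_cases h : a ≤ j
      · obtain ⟨j', rfl⟩ := Nat.exists_eq_add_of_le h
        rw [hc_mul_add hfa]
        by_cases hjb : j' = b
        · rw [hjb]; exact key
        · refine Ideal.mul_mem_left _ _ (hm _ fun h => hj ?_)
          exact Finset.mem_image.2 ⟨j', Finset.mem_erase.2 ⟨hjb, h⟩, rfl⟩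
      · rw [hc_mul_lt hfa (by omega)]; exact zero_mem _
    · intro g
      rw [← mul_assoc, ← hpm]
      exact ⟨fun h => Ideal.mul_mem_right _ _ h, fun h => (hp.mem_or_mem h).resolve_right ha1⟩

lemma homog_assoc [Finite σ] {ι : Type*} (f : ι → MvPolynomial σ k) (d : ℕ) (hf : ∀ i, (f i).IsHomogeneous d)
    (p : Ideal (MvPolynomial σ k))
    (hp : IsAssociatedPrime p (MvPolynomial σ k ⧸ Ideal.span (Set.range f))) :
    ∀ g ∈ p, ∀ e, homogeneousComponent e g ∈ p := by
  obtain ⟨h1, x, hx⟩ := isAssociatedPrime_iff.1 hp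
  obtain ⟨m, rfl⟩ := Ideal.Quotient.mk_surjective x
  refine homog_ann (Ideal.span (Set.range f)) p (homog_span f d hf) h1 _ m (Finset.range (m.totalDegree + 1))
    rfl ?_ ?_
  · intro j hj
    rw [homogeneousComponent_eq_zero j m (by simpa using hj)]; exact zero_mem _
  · intro g
    rw [hx, Submodule.mem_colon_singleton, Submodule.mem_bot, ← Ideal.Quotient.eq_zero_iff_mem]
    rfl

lemma le_assoc [Finite σ] (I : Ideal (MvPolynomial σ k)) (p : Ideal (MvPolynomial σ k))
    (hp : IsAssociatedPrime p (MvPolynomial σ k ⧸ I)) : I ≤ p := by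
  obtain ⟨h1, x, hx⟩ := isAssociatedPrime_iff.1 hp
  obtain ⟨m, rfl⟩ := Ideal.Quotient.mk_surjective x
  intro g hg
  rw [hx, Submodule.mem_colon_singleton, Submodule.mem_bot]
  exact Ideal.Quotient.eq_zero_iff_mem.2 (Ideal.mul_mem_right _ _ hg)
end

end PartL1

section PartL2

open MvPolynomial

section
variable {k : Type u} [Field k] {R : Type u} [CommRing R] [Algebra k R]

lemma norm_claim {s : ℕ} (W W' : Submodule k R) (hWW : W' ≤ W) (z : Fin s → R) (hz : ∀ i, z i ∈ W)
    (l : Fin s → k) (t : R) (ht : t ∈ W) (hl : ∀ i, z i - l i • t ∈ W') (e : ℕ)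
    (F : MvPolynomial (Fin s) k) (hF : F ∈ (homogeneousSubmodule (Fin s) k 1) ^ e) :
    ∀ w ∈ W, w * (aeval z F - eval l F • t ^ e) ∈ W' * W ^ e := by
  induction hF using Submodule.pow_induction_on_left' with
  | algebraMap r => 
    intro w hw
    simp [Algebra.algebraMap_eq_smul_one]
  | add x y i hx hy h1 h2 =>
    intro w hw
    have := add_mem (h1 w hw) (h2 w hw)
    convert this using 1
    simp only [map_add, Algebra.smul_def]; ring
  | mem_mul m hm i x hx ih =>
    intro w hw
    have hxz : aeval z x ∈ W ^ i := by
      have : aeval z x ∈ ((homogeneousSubmodule (Fin s) k 1) ^ i).map (aeval z : _ →ₐ[k] R).toLinearMap :=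
        ⟨x, hx, rfl⟩
      rw [Submodule.map_pow] at this
      refine (pow_le_pow_left' (?_ : _ ≤ W) i) this
      rw [homogeneousSubmodule_one_eq_span_X, Submodule.map_span, Submodule.span_le]
      rintro _ ⟨_, ⟨j, rfl⟩, rfl⟩
      simpa using hz j
    have hmz : aeval z m - eval l m • t ∈ W' := by
      have : m ∈ Submodule.span k (Set.range (X : Fin s → MvPolynomial (Fin s) k)) := by
        rw [← homogeneousSubmodule_one_eq_span_X]; exact hm
      clear hm
      induction this using Submodule.span_induction with
      | mem x hx => obtain ⟨j, rfl⟩ := hx; simpa using hl j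
      | zero => simp
      | add x y _ _ h1 h2 =>
        convert add_mem h1 h2 using 1
        simp only [map_add, Algebra.smul_def]; ring
      | smul a x _ h => 
        convert W'.smul_mem a h using 1
        simp only [map_smul, smul_eval, smul_sub, mul_smul]
    have e1 : w * (aeval z (m * x) - eval l (m * x) • t ^ (i + 1)) =
        (aeval z m - eval l m • t) * (aeval z x * w) +
        eval l m • (t * (w * (aeval z x - eval l x • t ^ i))) := by
      simp only [map_mul, Algebra.smul_def, pow_succ]; ring
    rw [e1]
    refine add_mem ?_ (Submodule.smul_mem _ _ ?_)
    · rw [pow_succ]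
      exact Submodule.mul_mem_mul hmz (Submodule.mul_mem_mul hxz hw)
    · have := Submodule.mul_mem_mul ht (ih w hw)
      rwa [pow_succ', ← mul_assoc, mul_comm W' W, mul_assoc]

def GradedHyp (V : Submodule k R) : Prop :=
  ∀ (m : ℕ) (v : Fin m → R), (∀ i, v i ∈ V) → ∀ F : MvPolynomial (Fin m) k, aeval v F = 0 →
    ∀ d, aeval v (homogeneousComponent d F) = 0

lemma pow_iter (W W' : Submodule k R) (e : ℕ) (h : W ^ (e + 1) ≤ W' * W ^ e) (j : ℕ) :
    W ^ (e + j) ≤ W' ^ j * W ^ e := by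
  induction j with
  | zero => simp
  | succ j ih =>
    calc W ^ (e + (j + 1)) = W * W ^ (e + j) := by rw [← add_assoc, pow_succ']
      _ ≤ W * (W' ^ j * W ^ e) := mul_le_mul_right ih _
      _ = W' ^ j * W ^ (e + 1) := by rw [pow_succ]; ring
      _ ≤ W' ^ j * (W' * W ^ e) := mul_le_mul_right h _
      _ = _ := by rw [pow_succ]; ring

lemma noether_norm [Infinite k] [Nontrivial R] (V : Submodule k R) (hV : GradedHyp V) (s : ℕ) :
    ∀ W : Submodule k R, W ≤ V → W.FG → Module.finrank k W = s →
    ∃ (d : ℕ) (y : Fin d → R), AlgebraicIndependent k y ∧ (∀ i, y i ∈ W) ∧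
      ∃ c, W ^ (c + 1) ≤ Submodule.span k (Set.range y) * W ^ c := by
  induction s using Nat.strong_induction_on with
  | _ s IH =>
  intro W hWV hfg hs
  haveI : Module.Finite k W := Module.Finite.iff_fg.2 hfg
  let b := Module.finBasisOfFinrankEq k W hs
  let z : Fin s → R := fun i => b i
  have hzW : ∀ i, z i ∈ W := fun i => (b i).2
  have hspan : Submodule.span k (Set.range z) = W := by
    have := b.span_eq
    have h2 := congrArg (Submodule.map W.subtype) this
    rw [Submodule.map_span, ← Set.range_comp, Submodule.map_top, Submodule.range_subtype] at h2
    exact h2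
  by_cases hz : AlgebraicIndependent k z
  · exact ⟨s, z, hz, hzW, 0, by rw [hspan]; simp⟩
  rw [algebraicIndependent_iff] at hz
  push Not at hz
  obtain ⟨F, hF0, hFne⟩ := hz
  obtain ⟨e, he⟩ : ∃ e, homogeneousComponent e F ≠ 0 := by
    by_contra! h
    apply hFne
    rw [← sum_homogeneousComponent F]
    exact Finset.sum_eq_zero fun i _ => h i
  have hG0 := hV s z (fun i => hWV (hzW i)) F hF0 e
  have hGh := homogeneousComponent_isHomogeneous e F
  set G := homogeneousComponent e F with hG
  obtain ⟨l, hl⟩ : ∃ l, eval l G ≠ 0 := by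
    by_contra! h
    exact he (MvPolynomial.funext fun x => by simpa using h x)
  obtain ⟨i0, hi0⟩ : ∃ i0, l i0 ≠ 0 := by
    by_contra! h
    have hl0 : l = 0 := _root_.funext h
    rcases Nat.eq_zero_or_pos e with h0 | h0
    · have : G = C (coeff 0 F) := by rw [hG, h0, homogeneousComponent_zero]
      rw [this] at hG0 he
      rw [aeval_C] at hG0
      have := (algebraMap k R).injective (hG0.trans (map_zero _).symm)
      exact he (by rw [this, C_0])
    · apply hl
      rw [hl0]
      have : eval (0 : Fin s → k) G = constantCoeff G := by
        rw [constantCoeff_eq]; exact congrFun (congrArg DFunLike.coe (eval_zero (R := k) (σ := Fin s))) G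
      rw [this, constantCoeff_eq]
      exact hGh.coeff_eq_zero (by simp; omega)
  set t : R := (l i0)⁻¹ • z i0 with ht
  have htW : t ∈ W := W.smul_mem _ (hzW _)
  let z' : {i // i ≠ i0} → R := fun i => z i - l i • t
  set W' : Submodule k R := Submodule.span k (Set.range z') with hW'
  have hW'W : W' ≤ W := by
    rw [hW', Submodule.span_le]
    rintro _ ⟨i, rfl⟩
    exact sub_mem (hzW _) (W.smul_mem _ htW)
  have hzl : ∀ i, z i - l i • t ∈ W' := by
    intro i
    by_cases hi : i = i0
    · rw [hi, ht, smul_smul, mul_inv_cancel₀ hi0, one_smul, sub_self]; exact zero_mem _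
    · exact Submodule.subset_span ⟨⟨i, hi⟩, rfl⟩
  have hfin : Module.finrank k W' < s := by
    refine lt_of_le_of_lt (finrank_range_le_card (R := k) z') ?_
    have : Fintype.card {i // i ≠ i0} < Fintype.card (Fin s) := Fintype.card_subtype_lt (x := i0) (by simp)
    simpa using this
  have hW'fg : W'.FG := Submodule.fg_span (Set.finite_range _)
  obtain ⟨d, y, hy, hyW, c, hc⟩ := IH _ hfin W' (hW'W.trans hWV) hW'fg rfl
  have hte : t ^ (e + 1) ∈ W' * W ^ e := by
    have := norm_claim W W' hW'W z hzW l t htW hzl e G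
      (by rw [homogeneousSubmodule_one_pow]; exact hGh) t htW
    rw [hG0, zero_sub, mul_neg, neg_mem_iff, mul_smul_comm, ← pow_succ'] at this
    exact (Submodule.smul_mem_iff _ hl).1 this
  have hstep : W ^ (e + 1) ≤ W' * W ^ e := by
    rw [pow_succ']
    refine Submodule.mul_le.2 fun w hw v hv => ?_
    obtain ⟨F', hF', rfl⟩ : v ∈ ((homogeneousSubmodule (Fin s) k 1) ^ e).map (aeval z : _ →ₐ[k] R).toLinearMap := by
      rw [Submodule.map_pow, homogeneousSubmodule_one_eq_span_X, Submodule.map_span, ← Set.range_comp]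
      have : (⇑(aeval z : _ →ₐ[k] R).toLinearMap ∘ (X : Fin s → MvPolynomial (Fin s) k)) = z := by
        ext i; simp
      rw [this, hspan]; exact hv
    have h1 := norm_claim W W' hW'W z hzW l t htW hzl e F' hF' w hw
    have h2 : w * t ^ e ∈ W' * W ^ e := by
      have hw' : w ∈ W' ⊔ Submodule.span k {t} := by
        have : W ≤ W' ⊔ Submodule.span k {t} := by
          rw [← hspan, Submodule.span_le]
          rintro _ ⟨i, rfl⟩
          have : z i = (z i - l i • t) + l i • t := by ring
          rw [this]
          exact Submodule.add_mem_sup (hzl i) (Submodule.smul_mem _ _ (Submodule.mem_span_singleton_self t))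
        exact this hw
      obtain ⟨w', hw2, t', ht', rfl⟩ := Submodule.mem_sup.1 hw'
      obtain ⟨a, rfl⟩ := Submodule.mem_span_singleton.1 ht'
      rw [add_mul]
      refine add_mem (Submodule.mul_mem_mul hw2 (Submodule.pow_mem_pow _ htW e)) ?_
      rw [smul_mul_assoc, ← pow_succ']
      exact Submodule.smul_mem _ _ hte
    have h3 := add_mem h1 (Submodule.smul_mem _ (eval l F') h2)
    convert h3 using 1
    simp only [Algebra.smul_def, AlgHom.toLinearMap_apply]; ring
  refine ⟨d, y, hy, fun i => hW'W (hyW i), e + c, ?_⟩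
  calc W ^ (e + c + 1) ≤ W' ^ (c + 1) * W ^ e := by rw [add_assoc]; exact pow_iter W W' e hstep (c + 1)
    _ ≤ (Submodule.span k (Set.range y) * W' ^ c) * W ^ e := mul_le_mul_left hc _
    _ ≤ (Submodule.span k (Set.range y) * W ^ c) * W ^ e :=
        mul_le_mul_left (mul_le_mul_right (pow_le_pow_left' hW'W c) _) _
    _ = _ := by rw [mul_assoc, ← pow_add, add_comm c e]
end

end PartL2

section PartL3

open MvPolynomial

section
variable {k : Type u} [Field k] {R : Type u} [CommRing R] [Algebra k R]

lemma finrank_mul_le' (A B : Submodule k R) (hA : A.FG) (hB : B.FG) :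
    Module.finrank k (A * B : Submodule k R) ≤ Module.finrank k A * Module.finrank k B := by
  have : Module.Finite k A := Module.Finite.iff_fg.2 hA
  have : Module.Finite k B := Module.Finite.iff_fg.2 hB
  rw [← Submodule.mulMap_range, ← Module.finrank_tensorProduct (R := k) (S := k)]
  exact LinearMap.finrank_range_le _

lemma finrank_homog (d j : ℕ) :
    Module.finrank k (homogeneousSubmodule (Fin d) k j) = (d + j - 1).choose j := by
  classical
  have h1 := Finset.card_finsuppAntidiag_nat_eq_choose (s := (Finset.univ : Finset (Fin d))) j
  rw [Finset.card_univ, Fintype.card_fin] at h1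
  let v : (Finset.univ : Finset (Fin d)).finsuppAntidiag j → MvPolynomial (Fin d) k := fun m => monomial m.1 1
  have hv : LinearIndependent k v := by
    have := (basisMonomials (Fin d) k).linearIndependent.comp
      (fun m : (Finset.univ : Finset (Fin d)).finsuppAntidiag j => m.1) Subtype.val_injective
    have e : v = (basisMonomials (Fin d) k) ∘
      (fun m : (Finset.univ : Finset (Fin d)).finsuppAntidiag j => m.1) := by
      ext m : 1
      simp [v]
    rw [e]
    exact this
  have hs : homogeneousSubmodule (Fin d) k j = Submodule.span k (Set.range v) := by
    apply le_antisymm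
    · intro p hp
      rw [p.as_sum]
      refine sum_mem fun m hm => ?_
      have : monomial m (coeff m p) = coeff m p • (monomial m 1 : MvPolynomial (Fin d) k) := by
        rw [smul_monomial, smul_eq_mul, mul_one]
      rw [this]
      refine Submodule.smul_mem _ _ (Submodule.subset_span ⟨⟨m, ?_⟩, rfl⟩)
      rw [Finset.mem_finsuppAntidiag]
      refine ⟨?_, by simp⟩
      have h2 := (mem_homogeneousSubmodule _ _).1 hp
      by_contra hne
      exact (mem_support_iff.1 hm) (h2.coeff_eq_zero (by rwa [Finsupp.degree_eq_sum]))
    · rw [Submodule.span_le]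
      rintro _ ⟨m, rfl⟩
      refine isHomogeneous_monomial _ ?_
      rw [Finsupp.degree_eq_sum]
      exact (Finset.mem_finsuppAntidiag.1 m.2).1
  rw [hs, finrank_span_eq_card hv, Fintype.card_coe, h1]

lemma span_pow_eq {d : ℕ} (y : Fin d → R) (j : ℕ) :
    (Submodule.span k (Set.range y)) ^ j = (homogeneousSubmodule (Fin d) k j).map (aeval y : _ →ₐ[k] R).toLinearMap := by
  rw [← homogeneousSubmodule_one_pow, Submodule.map_pow, homogeneousSubmodule_one_eq_span_X,
    Submodule.map_span, ← Set.range_comp]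
  congr 3
  ext i; simp

lemma finrank_span_pow {d : ℕ} (y : Fin d → R) (hy : AlgebraicIndependent k y) (j : ℕ) :
    Module.finrank k ((Submodule.span k (Set.range y)) ^ j : Submodule k R) = (d + j - 1).choose j := by
  rw [span_pow_eq, ← finrank_homog (k := k) d j]
  exact ((Submodule.equivMapOfInjective (aeval y : _ →ₐ[k] R).toLinearMap hy _).finrank_eq).symm

lemma mem_of_frac {A B : Type*} [CommRing A] [CommRing B] [IsDomain A] [IsDomain B] [Algebra A B] [FaithfulSMul A B]
    [IsIntegrallyClosed A] (t : B) (ht : IsIntegral A t) (a b : A) (hb : b ≠ 0)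
    (h : t * algebraMap A B b = algebraMap A B a) : ∃ s, algebraMap A B s = t := by
  let K := FractionRing A
  let L := FractionRing B
  have hinj : Function.Injective (Algebra.ofId A L) := by
    have : (Algebra.ofId A L : A → L) = (algebraMap B L) ∘ (algebraMap A B) := by
      ext x; exact IsScalarTower.algebraMap_apply A B L x
    rw [this]
    exact (IsFractionRing.injective B L).comp (FaithfulSMul.algebraMap_injective A B)
  let φ : K →ₐ[A] L := IsFractionRing.liftAlgHom hinj
  have hb' : algebraMap A K b ≠ 0 := fun h0 => hb ((IsFractionRing.injective A K) (h0.trans (map_zero _).symm))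
  have h2 : φ (algebraMap A K a / algebraMap A K b) = algebraMap B L t := by
    have hb2 : algebraMap A L b ≠ 0 := fun h0 => hb (hinj (h0.trans (map_zero _).symm))
    rw [map_div₀, AlgHom.commutes, AlgHom.commutes, div_eq_iff hb2, IsScalarTower.algebraMap_apply A B L,
      IsScalarTower.algebraMap_apply A B L, ← map_mul, h]
  have h3 : IsIntegral A (φ (algebraMap A K a / algebraMap A K b)) := by
    rw [h2]; exact ht.algebraMap
  rw [isIntegral_algHom_iff φ φ.toRingHom.injective, IsIntegrallyClosed.isIntegral_iff] at h3
  obtain ⟨s, hs⟩ := h3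
  refine ⟨s, ?_⟩
  apply IsFractionRing.injective B L
  rw [← h2, ← hs, AlgHom.commutes]
  exact (IsScalarTower.algebraMap_apply A B L s).symm

lemma integral_aux [IsDomain R] (V V' : Submodule k R) (A : Subalgebra k R) (hV'A : ∀ x ∈ V', x ∈ A) (hV : V.FG) (c : ℕ)
    (hc : V ^ (c + 1) ≤ V' * V ^ c) (t : R) (ht : t ∈ V) (ht0 : t ≠ 0) : IsIntegral A t := by
  have hfg : (V ^ c).FG := hV.pow c
  obtain ⟨S, hS⟩ := hfg
  have hN : Submodule.span A ((V ^ c : Submodule k R) : Set R) = Submodule.span A (S : Set R) := by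
    rw [← hS]
    exact Submodule.span_span_of_tower k A (S : Set R)
  refine isIntegral_of_smul_mem_submodule (A := R) (M := R) (Submodule.span A ((V ^ c : Submodule k R) : Set R)) ?_ ?_ t ?_
  · intro h0
    have : t ^ c ∈ Submodule.span A ((V ^ c : Submodule k R) : Set R) :=
      Submodule.subset_span (Submodule.pow_mem_pow _ ht c)
    rw [h0] at this
    exact pow_ne_zero c ht0 (by simpa using this)
  · rw [hN]; exact ⟨S, rfl⟩
  · intro n hn
    induction hn using Submodule.span_induction with
    | mem x hx =>
      have : t * x ∈ V' * V ^ c := hc (by rw [pow_succ']; exact Submodule.mul_mem_mul ht hx)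
      rw [smul_eq_mul]
      refine Submodule.mul_induction_on this ?_ ?_
      · intro m hm n hn
        exact Submodule.smul_mem _ (⟨m, hV'A m hm⟩ : A) (Submodule.subset_span hn)
      · intro x y hx hy; exact add_mem hx hy
    | zero => simp
    | add x y _ _ hx hy => rw [smul_add]; exact add_mem hx hy
    | smul a x _ hx => rw [smul_comm]; exact Submodule.smul_mem _ _ hx

lemma mem_span_of_mem_adjoin (V : Submodule k R) (hV : GradedHyp V) {d : ℕ} (y : Fin d → R)
    (hy : ∀ i, y i ∈ V) (t : R) (ht : t ∈ V) (htA : t ∈ Algebra.adjoin k (Set.range y)) :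
    t ∈ Submodule.span k (Set.range y) := by
  rw [Algebra.adjoin_range_eq_range_aeval] at htA
  obtain ⟨F, hF⟩ := htA
  have hF' : aeval y F = t := hF
  have h := hV (d + 1) (Fin.cons t y) (by intro i; refine Fin.cases ?_ ?_ i; exacts [ht, hy])
    (X 0 - rename Fin.succ F) (by
      rw [map_sub, aeval_X, aeval_rename]
      have : (Fin.cons t y : Fin (d + 1) → R) ∘ Fin.succ = y := by ext i; simp
      rw [this, hF']; simp) 1
  rw [map_sub, homogeneousComponent_of_mem (isHomogeneous_X k (0 : Fin (d + 1))), if_pos rfl, map_sub, aeval_X,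
    ← rename_homogeneousComponent, aeval_rename] at h
  have h2 : (Fin.cons t y : Fin (d + 1) → R) ∘ Fin.succ = y := by ext i; simp
  rw [h2, Fin.cons_zero, sub_eq_zero] at h
  rw [h]
  have := span_pow_eq (k := k) y 1
  rw [pow_one] at this
  rw [this]
  exact ⟨_, homogeneousComponent_isHomogeneous 1 F, rfl⟩

lemma lower_bound [IsDomain R] (V : Submodule k R) (hV : GradedHyp V) (hfg : V.FG) {d : ℕ} (y : Fin d → R)
    (hyi : AlgebraicIndependent k y) (hy : ∀ i, y i ∈ V) (c : ℕ)
    (hc : V ^ (c + 1) ≤ Submodule.span k (Set.range y) * V ^ c) (t : R) (ht : t ∈ V)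
    (htn : t ∉ Submodule.span k (Set.range y)) (j : ℕ) :
    (d + (j + 1) - 1).choose (j + 1) + (d + j - 1).choose j ≤ Module.finrank k (V ^ (j + 1) : Submodule k R) := by
  have ht0 : t ≠ 0 := by rintro rfl; exact htn (zero_mem _)
  set V' := Submodule.span k (Set.range y) with hV'
  set A := Algebra.adjoin k (Set.range y) with hA
  have hV'V : V' ≤ V := by
    rw [hV', Submodule.span_le]; rintro _ ⟨i, rfl⟩; exact hy i
  have hV'A : V' ≤ Subalgebra.toSubmodule A := by
    rw [hV', Submodule.span_le]; exact Algebra.subset_adjoin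
  have hV'Aj : ∀ j, V' ^ j ≤ Subalgebra.toSubmodule A := by
    intro j
    rw [hV', span_pow_eq]
    rintro _ ⟨F, _, rfl⟩
    rw [hA, Algebra.adjoin_range_eq_range_aeval]
    exact ⟨F, rfl⟩
  have hint := integral_aux V V' A hV'A hfg c hc t ht ht0
  have hcl : IsIntegrallyClosed A := IsIntegrallyClosed.of_equiv (hyi.aevalEquiv.toRingEquiv)
  have hfV : V'.FG := Submodule.fg_span (Set.finite_range _)
  have hf1 : Module.Finite k (V' ^ (j + 1) : Submodule k R) := Module.Finite.iff_fg.2 (hfV.pow _)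
  have hf2 : Module.Finite k (V' ^ j : Submodule k R) := Module.Finite.iff_fg.2 (hfV.pow _)
  have hf3 : Module.Finite k (V ^ (j + 1) : Submodule k R) := Module.Finite.iff_fg.2 (hfg.pow _)
  let μ : R →ₗ[k] R := LinearMap.mulLeft k t
  have hμ : Function.Injective μ := fun a b h => mul_left_cancel₀ ht0 h
  have hinf : V' ^ (j + 1) ⊓ (V' ^ j).map μ = ⊥ := by
    rw [eq_bot_iff]
    rintro _ ⟨ha, ⟨b, hb, rfl⟩⟩
    by_contra hne
    have hb0 : b ≠ 0 := by rintro rfl; apply hne; simp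
    obtain ⟨s, hs⟩ := mem_of_frac (A := A) t hint ⟨μ b, hV'Aj _ ha⟩ ⟨b, hV'Aj _ hb⟩
      (fun h => hb0 (congrArg Subtype.val h)) rfl
    refine htn (mem_span_of_mem_adjoin V hV y hy t ht ?_)
    rw [← hs]; exact s.2
  have e := Submodule.finrank_sup_add_finrank_inf_eq (V' ^ (j + 1)) ((V' ^ j).map μ)
  rw [hinf, finrank_bot, add_zero, ← (Submodule.equivMapOfInjective μ hμ (V' ^ j)).finrank_eq,
    finrank_span_pow y hyi, finrank_span_pow y hyi] at e
  rw [← e]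
  refine Submodule.finrank_mono (sup_le (pow_le_pow_left' hV'V _) ?_)
  rintro _ ⟨b, hb, rfl⟩
  rw [pow_succ']
  exact Submodule.mul_mem_mul ht (pow_le_pow_left' hV'V _ hb)

lemma upper_bound (V : Submodule k R) (hfg : V.FG) {d : ℕ} (y : Fin d → R)
    (hyi : AlgebraicIndependent k y) (c : ℕ)
    (hc : V ^ (c + 1) ≤ Submodule.span k (Set.range y) * V ^ c) (j : ℕ) :
    Module.finrank k (V ^ (c + j) : Submodule k R) ≤ (d + j - 1).choose j * Module.finrank k (V ^ c : Submodule k R) := by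
  have hfV : (Submodule.span k (Set.range y)).FG := Submodule.fg_span (Set.finite_range _)
  have := pow_iter V _ c hc j
  have hf3 : Module.Finite k (Submodule.span k (Set.range y) ^ j * V ^ c : Submodule k R) :=
    Module.Finite.iff_fg.2 ((hfV.pow _).mul (hfg.pow _))
  refine (Submodule.finrank_mono this).trans ?_
  rw [← finrank_span_pow y hyi]
  exact finrank_mul_le' _ _ (hfV.pow _) (hfg.pow _)
end

end PartL3

section PartL4

open Polynomial

lemma poly_neg_false (T : ℚ[X]) (D : ℕ) (h1 : T.natDegree ≤ D) (h2 : T.coeff D < 0)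
    (h3 : ∀ᶠ j : ℕ in Filter.atTop, 0 ≤ T.eval (j : ℚ)) : False := by
  have hD : T.natDegree = D := le_antisymm h1 (le_natDegree_of_ne_zero h2.ne)
  have hlc : T.leadingCoeff < 0 := by rw [leadingCoeff, hD]; exact h2
  by_cases hdeg : 0 < T.degree
  · have h4 := (tendsto_atBot_of_leadingCoeff_nonpos T hdeg hlc.le).comp (tendsto_natCast_atTop_atTop (R := ℚ))
    have h5 := h4.eventually (Filter.eventually_lt_atBot 0)
    obtain ⟨j, hj1, hj2⟩ := (h3.and h5).exists
    exact absurd hj1 (not_le.2 hj2)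
  · have := eq_C_of_degree_le_zero (not_lt.1 hdeg)
    have h0 : T.natDegree = 0 := by rw [this]; simp
    obtain ⟨j, hj⟩ := h3.exists
    rw [this, eval_C] at hj
    rw [leadingCoeff, h0] at hlc
    exact absurd hj (not_le.2 hlc)

lemma coeff_shift (P : ℚ[X]) (c : ℚ) (D : ℕ) (h : P.natDegree ≤ D) : (P.comp (X + C c)).coeff D = P.coeff D := by
  have hn : (P.comp (X + C c)).natDegree = P.natDegree := by rw [natDegree_comp, natDegree_X_add_C, mul_one]
  rcases h.eq_or_lt with h | h
  · have : (P.comp (X + C c)).leadingCoeff = P.leadingCoeff := by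
      rw [leadingCoeff_comp (by simp)]; simp
    rw [leadingCoeff, leadingCoeff, hn, h] at this
    exact this
  · rw [coeff_eq_zero_of_natDegree_lt h, coeff_eq_zero_of_natDegree_lt (hn ▸ h)]

lemma natDegree_shift (P : ℚ[X]) (c : ℚ) : (P.comp (X + C c)).natDegree = P.natDegree := by
  rw [natDegree_comp, natDegree_X_add_C, mul_one]

lemma hilbert_compare (P : ℚ[X]) (H : ℕ → ℕ) (hP : ∀ᶠ j : ℕ in Filter.atTop, (H j : ℚ) = P.eval (j : ℚ))
    (hm : (P.natDegree.factorial : ℚ) * P.leadingCoeff = 1) (d c M : ℕ)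
    (hup : ∀ j, H (c + j) ≤ (d + j - 1).choose j * M)
    (hlow : ∀ j, (d + (j + 1) - 1).choose (j + 1) + (d + j - 1).choose j ≤ H (j + 1)) : False := by
  have hlc : 0 < P.leadingCoeff := by
    by_contra! h
    have : (P.natDegree.factorial : ℚ) * P.leadingCoeff ≤ 0 :=
      mul_nonpos_of_nonneg_of_nonpos (by positivity) h
    linarith
  have hc := (Filter.tendsto_add_atTop_nat c).eventually hP
  have h1 := (Filter.tendsto_add_atTop_nat 1).eventually hP
  rcases d with _ | D
  · refine poly_neg_false (-(P.comp (X + C (c : ℚ)))) P.natDegree ?_ ?_ ?_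
    · rw [natDegree_neg, natDegree_shift]
    · rw [coeff_neg, coeff_shift _ _ _ le_rfl]; simpa using hlc
    · filter_upwards [hc, Filter.eventually_gt_atTop 0] with j hj hj0
      have := hup j
      rw [Nat.choose_eq_zero_of_lt (by omega), zero_mul, add_comm] at this
      rw [Nat.le_zero.1 this] at hj
      simp only [eval_neg, eval_comp, eval_add, eval_X, eval_C]
      push_cast at hj
      rw [← hj]; simp
  · set Q := preHilbertPoly ℚ D 0 with hQ
    have hQe : ∀ j : ℕ, (((D + 1 + j - 1).choose j : ℕ) : ℚ) = Q.eval (j : ℚ) := by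
      intro j
      rw [hQ, preHilbertPoly_eq_choose_sub_add ℚ D (Nat.zero_le j)]
      have : D + 1 + j - 1 = D + j := by omega
      rw [this, Nat.sub_zero, Nat.add_comm j D, Nat.choose_symm_add]
    have hQd : Q.natDegree = D := natDegree_preHilbertPoly ℚ D 0
    have hQc : Q.coeff D = (D.factorial : ℚ)⁻¹ := coeff_preHilbertPoly_self ℚ D 0
    have hPD : P.natDegree ≤ D := by
      by_contra! h
      refine poly_neg_false (C (M : ℚ) * Q - P.comp (X + C (c : ℚ))) P.natDegree ?_ ?_ ?_
      · refine (natDegree_sub_le _ _).trans (max_le ?_ ?_)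
        · exact (natDegree_C_mul_le _ _).trans (by omega)
        · rw [natDegree_shift]
      · rw [coeff_sub, coeff_C_mul, coeff_shift _ _ _ le_rfl, coeff_eq_zero_of_natDegree_lt (by omega), mul_zero,
          zero_sub]
        simpa using hlc
      · filter_upwards [hc] with j hj
        have := hup j
        rw [add_comm c j] at this
        have h2 : ((H (j + c) : ℕ) : ℚ) ≤ ((D + 1 + j - 1).choose j : ℕ) * (M : ℚ) := by exact_mod_cast this
        rw [hj, hQe] at h2
        simp only [eval_sub, eval_mul, eval_comp, eval_add, eval_X, eval_C]
        push_cast at h2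
        linarith
    refine poly_neg_false (P.comp (X + C 1) - (Q.comp (X + C 1) + Q)) D ?_ ?_ ?_
    · refine (natDegree_sub_le _ _).trans (max_le ?_ ((natDegree_add_le _ _).trans (max_le ?_ ?_)))
      · rwa [natDegree_shift]
      · rw [natDegree_shift]; omega
      · omega
    · rw [coeff_sub, coeff_add, coeff_shift _ _ _ hPD, coeff_shift _ _ _ hQd.le, hQc]
      have hpos : (0 : ℚ) < (D.factorial : ℚ)⁻¹ := by positivity
      rcases hPD.eq_or_lt with h | h
      · rw [leadingCoeff, h] at hm
        have : P.coeff D = (D.factorial : ℚ)⁻¹ := eq_inv_of_mul_eq_one_right hm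
        rw [this]; linarith
      · rw [coeff_eq_zero_of_natDegree_lt h]; linarith
    · filter_upwards [h1] with j hj
      have h2 : (((D + 1 + (j + 1) - 1).choose (j + 1) : ℕ) : ℚ) + ((D + 1 + j - 1).choose j : ℕ) ≤ (H (j + 1) : ℕ) := by
        exact_mod_cast hlow j
      rw [hj, hQe, hQe] at h2
      simp only [eval_sub, eval_comp, eval_add, eval_X, eval_C]
      push_cast at h2
      linarith

end PartL4

section PartL5

open MvPolynomial

section
variable {k : Type u} [Field k] {N : ℕ}

lemma hc_aeval {m : ℕ} (w : Fin m → MvPolynomial (Fin N) k) (hw : ∀ i, (w i).IsHomogeneous 1)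
    (F : MvPolynomial (Fin m) k) (d : ℕ) :
    homogeneousComponent d (aeval w F) = aeval w (homogeneousComponent d F) := by
  conv_lhs => rw [← sum_homogeneousComponent F, map_sum, map_sum]
  have : ∀ i, homogeneousComponent d (aeval w (homogeneousComponent i F)) =
      if i = d then aeval w (homogeneousComponent d F) else 0 := by
    intro i
    have h1 : aeval w (homogeneousComponent i F) ∈ homogeneousSubmodule (Fin N) k i := by
      have := (homogeneousComponent_isHomogeneous i F).aeval w hw
      rwa [one_mul] at this
    rw [homogeneousComponent_of_mem h1]
    by_cases h : i = d
    · subst h; simp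
    · rw [if_neg (Ne.symm h), if_neg h]
  simp only [this]
  rw [Finset.sum_ite_eq']
  split_ifs with h
  · rfl
  · rw [homogeneousComponent_eq_zero d F (by simpa using h), map_zero]

lemma gradedHyp_quot (p : Ideal (MvPolynomial (Fin N) k)) (hp : ∀ g ∈ p, ∀ e, homogeneousComponent e g ∈ p) :
    GradedHyp ((homogeneousSubmodule (Fin N) k 1).map (Ideal.Quotient.mkₐ k p).toLinearMap) := by
  intro m v hv F hF d
  choose w hw hwv using hv
  have hv' : v = fun i => Ideal.Quotient.mkₐ k p (w i) := by ext i; exact (hwv i).symm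
  have key : ∀ F : MvPolynomial (Fin m) k, aeval v F = Ideal.Quotient.mkₐ k p (aeval w F) := by
    intro F
    rw [← AlgHom.comp_apply, comp_aeval, hv']
  rw [key] at hF ⊢
  have h1 : aeval w F ∈ p := Ideal.Quotient.eq_zero_iff_mem.1 hF
  rw [← hc_aeval w hw]
  exact Ideal.Quotient.eq_zero_iff_mem.2 (hp _ h1 d)

lemma linear_of_mult_one [Infinite k] (p : Ideal (MvPolynomial (Fin N) k)) [p.IsPrime]
    (hp : ∀ g ∈ p, ∀ e, homogeneousComponent e g ∈ p) (hm : hilbertSamuelMultiplicity k p = 1) :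
    ∃ (d : ℕ) (y : Fin d → MvPolynomial (Fin N) k), (∀ i, y i ∈ homogeneousSubmodule (Fin N) k 1) ∧
      AlgebraicIndependent k (fun i => Ideal.Quotient.mkₐ k p (y i)) ∧
      (homogeneousSubmodule (Fin N) k 1).map (Ideal.Quotient.mkₐ k p).toLinearMap ≤
        Submodule.span k (Set.range fun i => Ideal.Quotient.mkₐ k p (y i)) := by
  set V := (homogeneousSubmodule (Fin N) k 1).map (Ideal.Quotient.mkₐ k p).toLinearMap with hV
  have hfg : V.FG := (homogeneousSubmodule_fg _ _ 1).map _
  have hH : ∀ j, hilbertFunction k p j = Module.finrank k (V ^ j : Submodule k _) := by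
    intro j
    rw [hilbertFunction, hV, ← Submodule.map_pow, homogeneousSubmodule_one_pow]
  have hgr := gradedHyp_quot p hp
  obtain ⟨d, y, hyi, hyV, c, hc⟩ := noether_norm V hgr _ V le_rfl hfg rfl
  choose w hw hwy using hyV
  have hyw : y = fun i => Ideal.Quotient.mkₐ k p (w i) := by ext i; exact (hwy i).symm
  refine ⟨d, w, hw, hyw ▸ hyi, ?_⟩
  rw [← hyw]
  by_contra hne
  obtain ⟨t, ht, htn⟩ := Set.not_subset.1 hne
  unfold hilbertSamuelMultiplicity at hm
  split_ifs at hm with h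
  · refine hilbert_compare h.choose (hilbertFunction k p) h.choose_spec hm d c
      (Module.finrank k (V ^ c : Submodule k _)) ?_ ?_
    · intro j; rw [hH]; exact upper_bound V hfg y hyi c hc j
    · intro j; rw [hH]
      exact lower_bound V hgr hfg y hyi (fun i => hwy i ▸ ⟨_, hw i, rfl⟩) c hc t ht htn j
  · exact absurd hm (by norm_num)
end

end PartL5

section PartL6

open MvPolynomial

section
variable {k : Type u} [Field k] {N : ℕ}

/-- kill the first `j` of the left variables -/
noncomputable def killHom (k : Type u) [Field k] (r d j : ℕ) :
    MvPolynomial (Fin r ⊕ Fin d) k →ₐ[k] MvPolynomial (Fin r ⊕ Fin d) k :=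
  aeval (Sum.elim (fun i => if i.1 < j then 0 else X (Sum.inl i)) (fun i => X (Sum.inr i)))

lemma killHom_inl (r d j : ℕ) (i : Fin r) :
    killHom k r d j (X (Sum.inl i)) = if i.1 < j then 0 else X (Sum.inl i) := by
  rw [killHom, aeval_X]; rfl

lemma killHom_inr (r d j : ℕ) (i : Fin d) :
    killHom k r d j (X (Sum.inr i)) = X (Sum.inr i) := by
  rw [killHom, aeval_X]; rfl

lemma killHom_comp (r d : ℕ) {j j' : ℕ} (h : j ≤ j') :
    (killHom k r d j').comp (killHom k r d j) = killHom k r d j' := by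
  apply algHom_ext
  rintro (i | i)
  · rw [AlgHom.comp_apply, killHom_inl]
    split_ifs with h'
    · rw [map_zero, killHom_inl, if_pos (by omega)]
    · rfl
  · rw [AlgHom.comp_apply, killHom_inr]

lemma ker_killHom (r d : ℕ) (G : MvPolynomial (Fin r ⊕ Fin d) k) (hG : killHom k r d r G = 0) :
    G ∈ Ideal.span (Set.range fun i : Fin r => (X (Sum.inl i) : MvPolynomial (Fin r ⊕ Fin d) k)) := by
  set J := Ideal.span (Set.range fun i : Fin r => (X (Sum.inl i) : MvPolynomial (Fin r ⊕ Fin d) k)) with hJ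
  have : (Ideal.Quotient.mkₐ k J).comp (killHom k r d r) = Ideal.Quotient.mkₐ k J := by
    apply algHom_ext
    rintro (i | i)
    · rw [AlgHom.comp_apply, killHom_inl, if_pos i.2, map_zero]
      have hi : (X (Sum.inl i) : MvPolynomial (Fin r ⊕ Fin d) k) ∈ J := Ideal.subset_span ⟨i, rfl⟩
      exact (Ideal.Quotient.eq_zero_iff_mem.2 hi).symm
    · rw [AlgHom.comp_apply, killHom_inr]
  have h2 := DFunLike.congr_fun this G
  rw [AlgHom.comp_apply, hG, map_zero] at h2
  exact Ideal.Quotient.eq_zero_iff_mem.1 h2.symm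

lemma heightENat_eq (p : Ideal (MvPolynomial (Fin N) k)) (hp : p.IsPrime) :
    p.heightENat = Order.height (⟨p, hp⟩ : PrimeSpectrum (MvPolynomial (Fin N) k)) := by
  apply le_antisymm
  · exact iInf₂_le (⟨p, hp⟩ : PrimeSpectrum (MvPolynomial (Fin N) k)) (le_refl p)
  · exact le_iInf₂ fun q hq => Order.height_mono hq

lemma exists_split_basis {M Q : Type*} [AddCommGroup M] [Module k M] [AddCommGroup Q] [Module k Q]
    [Module.Finite k M] (π : M →ₗ[k] Q) (d : ℕ) (y0 : Fin d → M) (hyi : LinearIndependent k (π ∘ y0))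
    (hspan : LinearMap.range π ≤ Submodule.span k (Set.range (π ∘ y0))) :
    ∃ (r : ℕ) (b : Module.Basis (Fin r ⊕ Fin d) k M), (∀ i, π (b (Sum.inl i)) = 0) ∧
      ∀ i, b (Sum.inr i) = y0 i := by
  let K := LinearMap.ker π
  let u0 := Module.finBasis k K
  have hli : LinearIndependent k (Sum.elim (fun i => (u0 i : M)) y0) := by
    refine LinearIndependent.sumElim_of_quotient u0.linearIndependent y0 ?_
    refine LinearIndependent.of_comp (K.liftQ π le_rfl) ?_
    exact hyi
  have hsp : ⊤ ≤ Submodule.span k (Set.range (Sum.elim (fun i => (u0 i : M)) y0)) := by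
    intro x _
    have hx : π x ∈ Submodule.span k (Set.range (π ∘ y0)) := hspan ⟨x, rfl⟩
    obtain ⟨a, ha⟩ := (Submodule.mem_span_range_iff_exists_fun k).1 hx
    have hK : x - ∑ i, a i • y0 i ∈ K := by
      rw [LinearMap.mem_ker, map_sub, map_sum, ← ha, sub_eq_zero]
      simp only [map_smul]
      rfl
    have hx2 : x = (x - ∑ i, a i • y0 i) + ∑ i, a i • y0 i := by abel
    rw [hx2]
    refine add_mem ?_ (sum_mem fun i _ => Submodule.smul_mem _ _ (Submodule.subset_span ⟨Sum.inr i, rfl⟩))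
    have h3 : (⟨_, hK⟩ : K) = ∑ i, u0.repr ⟨_, hK⟩ i • u0 i := (u0.sum_repr _).symm
    have h4 := congrArg K.subtype h3
    rw [map_sum] at h4
    have h5 : K.subtype ⟨_, hK⟩ = x - ∑ i, a i • y0 i := rfl
    rw [← h5, h4]
    refine sum_mem fun i _ => ?_
    rw [map_smul]
    exact Submodule.smul_mem _ _ (Submodule.subset_span ⟨Sum.inl i, rfl⟩)
  refine ⟨_, Module.Basis.mk hli hsp, ?_, ?_⟩
  · intro i
    rw [Module.Basis.mk_apply]
    exact (u0 i).2
  · intro i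
    rw [Module.Basis.mk_apply]
    rfl

lemma exists_adapted_basis (p : Ideal (MvPolynomial (Fin N) k))
    (d : ℕ) (y : Fin d → MvPolynomial (Fin N) k) (hy : ∀ i, y i ∈ homogeneousSubmodule (Fin N) k 1)
    (hyi : LinearIndependent k (fun i => Ideal.Quotient.mkₐ k p (y i)))
    (hspan : (homogeneousSubmodule (Fin N) k 1).map (Ideal.Quotient.mkₐ k p).toLinearMap ≤
        Submodule.span k (Set.range fun i => Ideal.Quotient.mkₐ k p (y i))) :
    ∃ (r : ℕ) (u : Fin r → MvPolynomial (Fin N) k)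
      (e : MvPolynomial (Fin r ⊕ Fin d) k ≃ₐ[k] MvPolynomial (Fin N) k),
      (∀ i, u i ∈ homogeneousSubmodule (Fin N) k 1) ∧
      LinearIndependent k u ∧ (∀ i, u i ∈ p) ∧ (∀ i, e (X (Sum.inl i)) = u i) ∧
      (∀ i, e (X (Sum.inr i)) = y i) := by
  have hfin : Module.Finite k (homogeneousSubmodule (Fin N) k 1) :=
    Module.Finite.iff_fg.2 (homogeneousSubmodule_fg _ _ 1)
  obtain ⟨r, b, hb1, hb2⟩ := exists_split_basis
    ((Ideal.Quotient.mkₐ k p).toLinearMap ∘ₗ (homogeneousSubmodule (Fin N) k 1).subtype)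
    d (fun i => ⟨y i, hy i⟩) hyi (by rw [LinearMap.range_comp, Submodule.range_subtype]; exact hspan)
  obtain ⟨e, he⟩ := coordEquiv b
  refine ⟨r, fun i => b (Sum.inl i), e, fun i => (b (Sum.inl i)).2, ?_, ?_, fun i => he _, ?_⟩
  · have := (b.linearIndependent.comp _ Sum.inl_injective).map'
      (homogeneousSubmodule (Fin N) k 1).subtype (Submodule.ker_subtype _)
    exact this
  · intro i
    exact Ideal.Quotient.eq_zero_iff_mem.1 (hb1 i)
  · intro i
    rw [he, hb2]

lemma exists_linear_gens (p : Ideal (MvPolynomial (Fin N) k)) (hpp : p.IsPrime)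
    (d : ℕ) (y : Fin d → MvPolynomial (Fin N) k) (hy : ∀ i, y i ∈ homogeneousSubmodule (Fin N) k 1)
    (hyi : AlgebraicIndependent k (fun i => Ideal.Quotient.mkₐ k p (y i)))
    (hspan : (homogeneousSubmodule (Fin N) k 1).map (Ideal.Quotient.mkₐ k p).toLinearMap ≤
        Submodule.span k (Set.range fun i => Ideal.Quotient.mkₐ k p (y i))) :
    ∃ (r : ℕ) (u : Fin r → MvPolynomial (Fin N) k), (∀ i, u i ∈ homogeneousSubmodule (Fin N) k 1) ∧
      LinearIndependent k u ∧ p = Ideal.span (Set.range u) ∧ p.heightENat = r := by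
  obtain ⟨r, u, e, hu1, huli, hup, heu, hey⟩ := exists_adapted_basis p d y hy hyi.linearIndependent hspan
  -- membership in p
  let ψ : MvPolynomial (Fin r ⊕ Fin d) k →ₐ[k] (MvPolynomial (Fin N) k ⧸ p) :=
    (Ideal.Quotient.mkₐ k p).comp e.toAlgHom
  let κ : MvPolynomial (Fin r ⊕ Fin d) k →ₐ[k] MvPolynomial (Fin d) k := aeval (Sum.elim 0 X)
  have hψ : (aeval (fun i => Ideal.Quotient.mkₐ k p (y i))).comp κ = ψ := by
    apply algHom_ext
    rintro (i | i)
    · simp only [κ, ψ, AlgHom.comp_apply, aeval_X, Sum.elim_inl, Pi.zero_apply, map_zero]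
      symm
      change Ideal.Quotient.mkₐ k p (e (X (Sum.inl i))) = 0
      rw [heu]
      exact Ideal.Quotient.eq_zero_iff_mem.2 (hup i)
    · simp only [κ, ψ, AlgHom.comp_apply, aeval_X, Sum.elim_inr]
      change _ = Ideal.Quotient.mkₐ k p (e (X (Sum.inr i)))
      rw [hey]
  have hκ : (rename Sum.inr).comp κ = killHom k r d r := by
    apply algHom_ext
    rintro (i | i)
    · rw [killHom_inl, if_pos i.2]; simp [κ]
    · rw [killHom_inr]; simp [κ]
  have hmem : ∀ G, e G ∈ p ↔ killHom k r d r G = 0 := by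
    intro G
    have h1 : e G ∈ p ↔ ψ G = 0 := Ideal.Quotient.eq_zero_iff_mem.symm
    rw [h1, ← hψ, ← hκ, AlgHom.comp_apply, AlgHom.comp_apply]
    rw [map_eq_zero_iff _ (rename_injective _ Sum.inr_injective)]
    exact map_eq_zero_iff _ hyi
  have hpu : p = Ideal.span (Set.range u) := by
    apply le_antisymm
    · intro g hg
      have h1 := ker_killHom r d (e.symm g) ((hmem _).1 (by simpa using hg))
      have h2 := Ideal.mem_map_of_mem (e : MvPolynomial (Fin r ⊕ Fin d) k →+* MvPolynomial (Fin N) k) h1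
      rw [Ideal.map_span, ← Set.range_comp] at h2
      have h3 : ((e : MvPolynomial (Fin r ⊕ Fin d) k →+* MvPolynomial (Fin N) k) ∘
          fun i : Fin r => (X (Sum.inl i) : MvPolynomial (Fin r ⊕ Fin d) k)) = u := by
        ext1 i; exact heu i
      rw [h3] at h2
      simpa using h2
    · rw [Ideal.span_le]; rintro _ ⟨i, rfl⟩; exact hup i
  refine ⟨r, u, hu1, huli, hpu, ?_⟩
  rw [heightENat_eq p hpp]
  apply le_antisymm
  · rw [← PrimeSpectrum.height_eq_orderHeight]
    refine (Ideal.height_le_spanFinrank p hpp.ne_top).trans ?_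
    have h1 : p.spanFinrank ≤ r := by
      have h2 := Submodule.spanFinrank_span_le_ncard_of_finite (R := MvPolynomial (Fin N) k) (Set.finite_range u)
      change (Ideal.span (Set.range u)).spanFinrank ≤ _ at h2
      rw [← hpu] at h2
      refine h2.trans ?_
      rw [← Set.image_univ]
      refine (Set.ncard_image_le).trans ?_
      simp [Set.ncard_univ]
    exact_mod_cast h1
  · let q : ℕ → MvPolynomial (Fin N) k →ₐ[k] MvPolynomial (Fin r ⊕ Fin d) k :=
      fun j => (killHom k r d j).comp e.symm.toAlgHom
    have hq : ∀ j g, q j g = killHom k r d j (e.symm g) := fun _ _ => rfl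
    let s : LTSeries (PrimeSpectrum (MvPolynomial (Fin N) k)) :=
      { length := r
        toFun := fun j => ⟨RingHom.ker (q j.1), RingHom.ker_isPrime _⟩
        step := by
          intro j
          have hlt : RingHom.ker (q j.1) < RingHom.ker (q (j.1 + 1)) → (⟨RingHom.ker (q j.1), RingHom.ker_isPrime _⟩ :
              PrimeSpectrum (MvPolynomial (Fin N) k)) < ⟨RingHom.ker (q (j.1 + 1)), RingHom.ker_isPrime _⟩ :=
            fun h => (PrimeSpectrum.asIdeal_lt_asIdeal _ _).1 h
          refine hlt ?_
          refine lt_of_le_of_ne ?_ ?_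
          · intro g hg
            rw [RingHom.mem_ker, hq] at hg ⊢
            rw [← killHom_comp r d (Nat.le_succ j.1), AlgHom.comp_apply, hg, map_zero]
          · intro h
            have h1 : e (X (Sum.inl j)) ∈ RingHom.ker (q (j.1 + 1)) := by
              rw [RingHom.mem_ker, hq, AlgEquiv.symm_apply_apply, killHom_inl, if_pos (by omega)]
            rw [← h, RingHom.mem_ker, hq, AlgEquiv.symm_apply_apply, killHom_inl, if_neg (by omega)] at h1
            exact X_ne_zero _ h1 }
    refine Order.length_le_height (p := s) ?_
    rw [← PrimeSpectrum.asIdeal_le_asIdeal]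
    intro g hg
    have hg' : q r g = 0 := hg
    rw [hq, ← hmem] at hg'
    simpa using hg'
end

end PartL6

section PartF1

open MvPolynomial CategoryTheory


lemma quadric_coeffs {k : Type u} [Field k] {N : ℕ} (u : Fin 3 → MvPolynomial (Fin N) k)
    (hu : ∀ i, u i ∈ homogeneousSubmodule (Fin N) k 1) (f : MvPolynomial (Fin N) k) (hf : f.IsHomogeneous 2)
    (hfu : f ∈ Ideal.span (Set.range u)) :
    ∃ g : Fin 3 → MvPolynomial (Fin N) k, (∀ i, g i ∈ homogeneousSubmodule (Fin N) k 1) ∧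
      f = u 0 * g 0 + u 1 * g 1 + u 2 * g 2 := by
  obtain ⟨g, hg⟩ := (Submodule.mem_span_range_iff_exists_fun _).1 hfu
  refine ⟨fun i => homogeneousComponent 1 (g i), fun i => homogeneousComponent_isHomogeneous 1 (g i), ?_⟩
  have h1 := congrArg (homogeneousComponent 2) hg
  have h2 : homogeneousComponent 2 f = f := by
    have := homogeneousComponent_of_mem (n := 2) (m := 2) hf
    simpa using this
  rw [map_sum, h2] at h1
  rw [← h1, Fin.sum_univ_three]
  have h3 : ∀ i, homogeneousComponent 2 (g i • u i) = u i * homogeneousComponent 1 (g i) := by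
    intro i
    rw [smul_eq_mul, mul_comm]
    exact hc_mul_add (i := 1) (hu i) 1
  simp only [h3]

lemma pd_le_main (k : Type u) [Field k] [IsAlgClosed k] (N : ℕ) (n : ℕ)
    (f : Fin n → MvPolynomial (Fin N) k)
    (hf : ∀ i, (f i).IsHomogeneous 2)
    (I : Ideal (MvPolynomial (Fin N) k))
    (hI : I = Ideal.span (Set.range f))
    (p : Ideal (MvPolynomial (Fin N) k))
    (hp : IsAssociatedPrime p (MvPolynomial (Fin N) k ⧸ I))
    (hpht : p.heightENat = 3)
    (hpe : hilbertSamuelMultiplicity k p = 1) :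
    projDim (MvPolynomial (Fin N) k) (MvPolynomial (Fin N) k ⧸ I) ≤ (3 * n + 1 : ℕ) := by
  apply projDim_le_of_hasProjectiveDimensionLE
  rcases Nat.eq_zero_or_pos n with hn | hn
  · subst hn
    have hI0 : I = ⊥ := by rw [hI, Set.range_eq_empty, Ideal.span_empty]
    subst hI0
    refine pdLE_mono _ (Nat.zero_le _) ((pdLE_zero_iff _).2 ?_)
    exact Module.Projective.of_equiv (Submodule.quotEquivOfEqBot (⊥ : Ideal (MvPolynomial (Fin N) k)) rfl).symm
  · have hpp : p.IsPrime := hp.isPrime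
    have hIp := le_assoc I p hp
    have hh : ∀ g ∈ p, ∀ e, homogeneousComponent e g ∈ p := homog_assoc f 2 hf p (hI ▸ hp)
    have hinf : Infinite k := IsAlgClosed.instInfinite
    obtain ⟨d, y, hy, hyi, hsp⟩ := linear_of_mult_one p hh hpe
    obtain ⟨r, u, hu, huli, hpu, hr⟩ := exists_linear_gens p hpp d y hy hyi hsp
    rw [hpht] at hr
    have hr3 : r = 3 := by exact_mod_cast hr.symm
    subst hr3
    have hfp : ∀ i, f i ∈ Ideal.span (Set.range u) := fun i => by
      rw [← hpu]; apply hIp; rw [hI]; exact Ideal.subset_span ⟨i, rfl⟩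
    choose g hg hfg using fun i => quadric_coeffs u hu (f i) (hf i) (hfp i)
    let φ : GV n → MvPolynomial (Fin N) k := fun v => match v with
      | .x => u 0
      | .y => u 1
      | .z => u 2
      | .a i => g i 0
      | .b i => g i 1
      | .c i => g i 2
    have h1 : ∀ v, φ v ∈ homogeneousSubmodule (Fin N) k 1 := by
      rintro (_ | _ | _ | i | i | i)
      exacts [hu 0, hu 1, hu 2, hg i 0, hg i 1, hg i 2]
    have hq : GV.qAt φ = f := by
      ext1 i
      rw [hfg i]; rfl
    have hli : LinearIndepOn k φ {GV.x, GV.y, GV.z} := by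
      let ε : Fin 3 → GV n := ![GV.x, GV.y, GV.z]
      have hε : φ ∘ ε = u := by
        ext1 i; fin_cases i <;> rfl
      have h3 : LinearIndepOn k φ (Set.range ε) := by
        have hinj : Function.Injective ε := by
          intro i j h
          fin_cases i <;> fin_cases j <;> simp [ε] at h ⊢
        rw [linearIndepOn_range_iff hinj, hε]; exact huli
      have hset : ({GV.x, GV.y, GV.z} : Set (GV n)) = Set.range ε := by
        ext v
        simp [ε, Fin.exists_fin_succ, eq_comm]
        tauto
      rw [hset]
      exact h3
    rw [hI, ← hq]
    exact GV.pd_assembly hn φ h1 hli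

end PartF1

/-- If `I` is a homogeneous ideal generated by `n` quadrics in a polynomial ring over an
algebraically closed field, and `I` has an associated prime `p` with `height p = 3` and
Hilbert–Samuel multiplicity `e(S/p) = 1`, then the stated bound on `pd_S(S/I)` holds. -/
theorem pd_le_of_assoc_prime_mult_one (k : Type u) [Field k] [IsAlgClosed k] (N : ℕ) (n : ℕ)
    (f : Fin n → MvPolynomial (Fin N) k)
    (hf : ∀ i, (f i).IsHomogeneous 2)
    (I : Ideal (MvPolynomial (Fin N) k))
    (hI : I = Ideal.span (Set.range f))
    (p : Ideal (MvPolynomial (Fin N) k))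
    (hp : IsAssociatedPrime p (MvPolynomial (Fin N) k ⧸ I))
    (hpht : p.heightENat = 3)
    (hpe : hilbertSamuelMultiplicity k p = 1) :
    projDim (MvPolynomial (Fin N) k) (MvPolynomial (Fin N) k ⧸ I) ≤ (3 * n + 1 : ℕ) := by
  exact pd_le_main k N n f hf I hI p hp hpht hpe
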